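/- arXiv:2603.28485 — 6 statements merged into one kernel-verified Lean document; each statement's English description precedes it below -/
import Mathlib

section
/- Let m ≥ 2, let π be a permutation of F_{2^m}, and define h : F_{2^m} × F_{2^m} → F_2 by h(x₁,x₂) = Tr_1^m(x₁ π(x₂)). Then every M-subspace of h of dimension at least 2 is contained in F_{2^m} × {0} (equivalently, F_{2^m} × {0} is the unique m-dimensional M-subspace of h containing all nontrivial M-subspaces of h) if and only if π satisfies Property (P). -/
/-- The second-order derivative `D_a D_b f (x) = f x + f (x+a) + f (x+b) + f (x+a+b)`. -/
def D2 {V : Type*} [AddCommGroup V] (f : V → ZMod 2) (a b x : V) : ZMod 2 :=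
  f x + f (x + a) + f (x + b) + f (x + a + b)

/-- An `M`-subspace of `f` : a subspace on which all second-order derivatives of `f` vanish. -/
def IsMSubspace {V : Type*} [AddCommGroup V] [Module (ZMod 2) V] (f : V → ZMod 2)
    (U : Submodule (ZMod 2) V) : Prop :=
  ∀ a ∈ U, ∀ b ∈ U, ∀ x, D2 f a b x = 0

/-- The absolute trace map of `F_{2^m}`. -/
noncomputable def Tr (m : ℕ) (x : GaloisField 2 m) : ZMod 2 :=
  Algebra.trace (ZMod 2) (GaloisField 2 m) x

/-- Property (P) for a permutation `π` of `F_{2^m}`. -/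
def PropertyP (m : ℕ) (π : GaloisField 2 m → GaloisField 2 m) : Prop :=
  ∀ a₁ a₂ b₁ b₂ : GaloisField 2 m,
    ((∀ x, π x + π (x + a₂) + π (x + b₂) + π (x + a₂ + b₂) = 0) ∧
     (∀ x, Tr m (a₁ * π (x + a₂) + b₁ * π (x + b₂) + (a₁ + b₁) * π (x + a₂ + b₂)) = 0)) ↔
    ((a₁ = 0 ∧ a₂ = 0) ∨ (b₁ = 0 ∧ b₂ = 0) ∨ (a₁ = b₁ ∧ a₂ = b₂) ∨ (a₂ = 0 ∧ b₂ = 0))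

/-!
Since `D_a D_{b+c} f (x) = D_a D_b f (x) + D_a D_c f (x+b)`, the directions `b` in which `D_a D_b f`
vanishes identically form a subspace. Hence the span of `a` and `b` is an `M`-subspace as soon as
`D_a D_b f = 0`, and a subspace `W` contains every `M`-subspace of dimension at least `2` if and
only if it contains every linearly independent pair `a, b` with `D_a D_b f = 0`. Over `F_2`,
independence means `a ≠ 0`, `b ≠ 0` and `a ≠ b`. For `h(x₁, x₂) = ⟨x₁, π(x₂)⟩` the derivative
`D_a D_b h` is affine in `x₁`, with linear part `⟨x₁, D_{a₂} D_{b₂} π(x₂)⟩`; as the pairing is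
nondegenerate, it vanishes identically if and only if conditions (i) and (ii) of Property (P) hold.
-/

open Submodule

section SecondDerivative

variable {V : Type*} [AddCommGroup V] (f : V → ZMod 2)

theorem D2_comm (a b x : V) : D2 f a b x = D2 f b a x := by
  simp only [D2, add_right_comm x b a]
  ring

theorem D2_zero_right (a x : V) : D2 f a 0 x = 0 := by
  simp only [D2, add_zero, add_assoc (f x + _), CharTwo.add_self_eq_zero]

theorem D2_add_right (a b c x : V) : D2 f a (b + c) x = D2 f a b x + D2 f a c (x + b) := by
  simp only [D2, add_right_comm x b a, ← add_assoc]
  linear_combination -CharTwo.add_self_eq_zero (f (x + b)) -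
    CharTwo.add_self_eq_zero (f (x + a + b))

variable [Module (ZMod 2) V]

theorem D2_self (a x : V) : D2 f a a x = 0 := by
  have add_self : a + a = 0 := ZModModule.add_self a
  simp only [D2, add_assoc x, add_self, add_zero]
  linear_combination CharTwo.add_self_eq_zero (f x) + CharTwo.add_self_eq_zero (f (x + a))

/-- The subspace of directions `b` for which `D_a D_b f` vanishes identically. -/
def D2Annihilator (a : V) : Submodule (ZMod 2) V :=
  AddSubgroup.toZModSubmodule 2
    { carrier := {b | ∀ x, D2 f a b x = 0}
      zero_mem' := D2_zero_right f a
      add_mem' := fun hb hc x ↦ by rw [D2_add_right, hb, hc, add_zero]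
      neg_mem' := fun hb ↦ by rwa [ZModModule.neg_eq_self] }

variable {f}

theorem mem_D2Annihilator {a b : V} : b ∈ D2Annihilator f a ↔ ∀ x, D2 f a b x = 0 :=
  Iff.rfl

theorem mem_D2Annihilator_comm {a b : V} : b ∈ D2Annihilator f a ↔ a ∈ D2Annihilator f b := by
  simp only [mem_D2Annihilator, D2_comm f a b]

theorem isMSubspace_span {s : Set V} (hs : ∀ a ∈ s, s ⊆ D2Annihilator f a) :
    IsMSubspace f (span (ZMod 2) s) := by
  have span_le_of_mem (a) (ha : a ∈ s) : span (ZMod 2) s ≤ D2Annihilator f a := span_le.2 (hs a ha)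
  intro a ha
  exact span_le.2 fun b hb ↦ mem_D2Annihilator_comm.1 (span_le_of_mem b hb ha)

theorem isMSubspace_span_pair {a b : V} (hab : ∀ x, D2 f a b x = 0) :
    IsMSubspace f (span (ZMod 2) {a, b}) := by
  have mem_a : a ∈ D2Annihilator f a := D2_self f a
  have mem_b : b ∈ D2Annihilator f b := D2_self f b
  have mem_ab : b ∈ D2Annihilator f a := hab
  refine isMSubspace_span ?_
  rintro _ (rfl | rfl) _ (rfl | rfl)
  exacts [mem_a, mem_ab, mem_D2Annihilator_comm.1 mem_ab, mem_b]

end SecondDerivative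

theorem two_le_rank_span_pair {R M : Type*} [Ring R] [Nontrivial R] [AddCommGroup M]
    [Module R M] {a b : M} (hab : LinearIndependent R ![a, b]) :
    2 ≤ Module.rank R (span R {a, b}) := by
  rw [← Matrix.range_cons_cons_empty a b ![]]
  simpa using (linearIndependent_span hab).cardinal_lift_le_rank

theorem linearIndependent_pair_zmod_two_iff {V : Type*} [AddCommGroup V] [Module (ZMod 2) V]
    {a b : V} :
    LinearIndependent (ZMod 2) ![a, b] ↔ a ≠ 0 ∧ b ≠ 0 ∧ a ≠ b := by
  by_cases ha : a = 0
  · exact iff_of_false (fun hab ↦ hab.ne_zero 0 ha) fun hab ↦ hab.1 ha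
  · have forall_smul_ne : (∀ c : ZMod 2, c • a ≠ b) ↔ (0 : ZMod 2) • a ≠ b ∧ (1 : ZMod 2) • a ≠ b :=
      Fin.forall_fin_two
    rw [LinearIndependent.pair_iff' ha, forall_smul_ne, zero_smul, one_smul, ne_comm (a := 0)]
    exact (and_iff_right ha).symm

theorem forall_isMSubspace_le_iff {V : Type*} [AddCommGroup V] [Module (ZMod 2) V]
    {f : V → ZMod 2} {W : Submodule (ZMod 2) V} :
    (∀ U : Submodule (ZMod 2) V, IsMSubspace f U → 2 ≤ Module.rank (ZMod 2) U → U ≤ W) ↔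
      ∀ a b, LinearIndependent (ZMod 2) ![a, b] → (∀ x, D2 f a b x = 0) → a ∈ W ∧ b ∈ W := by
  constructor
  · intro hW a b hab hD
    have span_le_W : span (ZMod 2) {a, b} ≤ W :=
      hW _ (isMSubspace_span_pair hD) (two_le_rank_span_pair hab)
    exact ⟨span_le_W (mem_span_of_mem (by simp)), span_le_W (mem_span_of_mem (by simp))⟩
  · intro hW U hU hrank a ha
    by_cases ha0 : a = 0
    · exact ha0 ▸ W.zero_mem
    · obtain ⟨b, hab⟩ := exists_linearIndependent_pair_of_one_lt_rank
        (Cardinal.one_lt_two.trans_le hrank) (x := (⟨a, ha⟩ : U)) (by simpa using ha0)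
      have linearIndependent_coe : LinearIndependent (ZMod 2) ![a, (b : V)] :=
        LinearIndependent.pair_iff.2 fun s t hst ↦
          LinearIndependent.pair_iff.1 hab s t (Subtype.ext hst)
      exact (hW a b linearIndependent_coe (hU a ha b b.2)).1

section MaioranaMcFarland

variable {E F V : Type*} [AddCommGroup E] [Module (ZMod 2) E] [AddCommGroup F] [Module (ZMod 2) F]
  [AddCommGroup V] (B : E →ₗ[ZMod 2] F →ₗ[ZMod 2] ZMod 2) (π : V → F)

/-- The Maiorana–McFarland function `(x₁, x₂) ↦ ⟨x₁, π x₂⟩` of a map `π`, for a bilinear pairing `B`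
with values in `F_2`. The classical one is the case of the trace form of `F_{2^m}`. -/
def maioranaMcFarland (x : E × V) : ZMod 2 :=
  B x.1 (π x.2)

/-- Conditions (i) and (ii) of Property (P), for a pairing `B` in place of the trace form and with
the directions written as `a = (a₁, a₂)` and `b = (b₁, b₂)`. -/
def PairingConditions (a b : E × V) : Prop :=
  (∀ y, π y + π (y + a.2) + π (y + b.2) + π (y + a.2 + b.2) = 0) ∧
    ∀ y, B a.1 (π (y + a.2)) + B b.1 (π (y + b.2)) + B (a.1 + b.1) (π (y + a.2 + b.2)) = 0

/-- Property (P) of a map `π` with respect to a pairing `B`; `PropertyP` is the case of the trace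
form. -/
def PairingPropertyP : Prop :=
  ∀ a b : E × V, PairingConditions B π a b ↔ a = 0 ∨ b = 0 ∨ a = b ∨ (a.2 = 0 ∧ b.2 = 0)

theorem D2_maioranaMcFarland (a b x : E × V) :
    D2 (maioranaMcFarland B π) a b x =
      B x.1 (π x.2 + π (x.2 + a.2) + π (x.2 + b.2) + π (x.2 + a.2 + b.2)) +
        (B a.1 (π (x.2 + a.2)) + B b.1 (π (x.2 + b.2)) +
          B (a.1 + b.1) (π (x.2 + a.2 + b.2))) := by
  simp only [D2, maioranaMcFarland, Prod.fst_add, Prod.snd_add, map_add, LinearMap.add_apply]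
  ring

theorem D2_maioranaMcFarland_eq_zero_of_snd_eq_zero {a b : E × V} (ha : a.2 = 0)
    (hb : b.2 = 0) (x : E × V) : D2 (maioranaMcFarland B π) a b x = 0 := by
  have add_self (t : ZMod 2) : t + t = 0 := CharTwo.add_self_eq_zero t
  simp only [D2, maioranaMcFarland, Prod.fst_add, Prod.snd_add, ha, hb, add_zero, map_add,
    LinearMap.add_apply]
  linear_combination 2 * add_self (B x.1 (π x.2)) + add_self (B a.1 (π x.2)) +
    add_self (B b.1 (π x.2))

variable {B} {π}

theorem forall_D2_maioranaMcFarland_eq_zero_iff (hB : B.SeparatingRight) {a b : E × V} :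
    (∀ x, D2 (maioranaMcFarland B π) a b x = 0) ↔ PairingConditions B π a b := by
  simp only [D2_maioranaMcFarland]
  constructor
  · intro hD
    have constant_part (y : V) :
        B a.1 (π (y + a.2)) + B b.1 (π (y + b.2)) + B (a.1 + b.1) (π (y + a.2 + b.2)) = 0 := by
      simpa only [map_zero, LinearMap.zero_apply, zero_add] using hD (0, y)
    refine ⟨fun y ↦ hB _ fun x₁ ↦ ?_, constant_part⟩
    simpa only [constant_part, add_zero] using hD (x₁, y)
  · rintro ⟨hlinear, hconstant⟩ x
    rw [hlinear, hconstant, map_zero, add_zero]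

variable [Module (ZMod 2) V]

theorem pairingPropertyP_iff_forall_linearIndependent (hB : B.SeparatingRight) :
    PairingPropertyP B π ↔ ∀ a b, LinearIndependent (ZMod 2) ![a, b] →
      (∀ x, D2 (maioranaMcFarland B π) a b x = 0) → a.2 = 0 ∧ b.2 = 0 := by
  simp only [PairingPropertyP, ← forall_D2_maioranaMcFarland_eq_zero_iff hB,
    linearIndependent_pair_zmod_two_iff]
  refine forall₂_congr fun a b ↦ ⟨fun hP hab hD ↦ ?_, fun hP ↦ ⟨fun hD ↦ ?_, ?_⟩⟩
  · have := hP.1 hD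
    tauto
  · tauto
  · rintro (rfl | rfl | rfl | ⟨ha, hb⟩) x
    · rw [D2_comm, D2_zero_right]
    · exact D2_zero_right _ a x
    · exact D2_self _ a x
    · exact D2_maioranaMcFarland_eq_zero_of_snd_eq_zero B π ha hb x

theorem MM_unique_M_subspace_iff_propertyP_general (hB : B.SeparatingRight) (π : V → F) :
    (∀ U : Submodule (ZMod 2) (E × V), IsMSubspace (maioranaMcFarland B π) U →
        2 ≤ Module.rank (ZMod 2) U →
        U ≤ (⊤ : Submodule (ZMod 2) E).prod (⊥ : Submodule (ZMod 2) V)) ↔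
      PairingPropertyP B π := by
  simp only [forall_isMSubspace_le_iff, pairingPropertyP_iff_forall_linearIndependent hB, mem_prod,
    mem_top, mem_bot, true_and]

end MaioranaMcFarland

theorem propertyP_iff_pairingPropertyP_traceForm {m : ℕ} {π : GaloisField 2 m → GaloisField 2 m} :
    PropertyP m π ↔ PairingPropertyP (Algebra.traceForm (ZMod 2) (GaloisField 2 m)) π := by
  simp only [PropertyP, PairingPropertyP, PairingConditions, Tr, map_add, LinearMap.add_apply,
    Algebra.traceForm_apply, add_mul, Prod.forall, Prod.ext_iff, Prod.fst_zero, Prod.snd_zero]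

/-- Corollary 3.5: for the Maiorana–McFarland function `h(x₁,x₂) = Tr(x₁ π(x₂))`, every
`M`-subspace of dimension at least `2` is contained in `F_{2^m} × {0}` if and only if the
permutation `π` satisfies Property (P). -/
theorem MM_unique_M_subspace_iff_propertyP
    (m : ℕ) (hm : 2 ≤ m)
    (π : GaloisField 2 m → GaloisField 2 m) (hπ : Function.Bijective π)
    (h : GaloisField 2 m × GaloisField 2 m → ZMod 2)
    (hh : ∀ x₁ x₂, h (x₁, x₂) = Tr m (x₁ * π x₂)) :
    (∀ U : Submodule (ZMod 2) (GaloisField 2 m × GaloisField 2 m),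
        IsMSubspace h U → 2 ≤ Module.finrank (ZMod 2) U →
        U ≤ (⊤ : Submodule (ZMod 2) (GaloisField 2 m)).prod
              (⊥ : Submodule (ZMod 2) (GaloisField 2 m))) ↔
    PropertyP m π := by
  obtain rfl : h = maioranaMcFarland (Algebra.traceForm (ZMod 2) (GaloisField 2 m)) π :=
    funext fun x ↦ hh x.1 x.2
  simpa only [propertyP_iff_pairingPropertyP_traceForm, ← Module.finrank_eq_rank,
    Nat.ofNat_le_cast] using
    MM_unique_M_subspace_iff_propertyP_general
      (traceForm_nondegenerate (ZMod 2) (GaloisField 2 m)).2 π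
end

section
/- Let m, k be positive integers with m > k + 2, and let π be a permutation of F_{2^m} satisfying Property (P). For z ∈ F_{2^k} define f^{(z)} : F_{2^m} × F_{2^m} → F_2 by f^{(z)}(x₁,x₂) = Tr_1^m(x₁ π(x₂)) if Tr_1^k(z) = 0 and f^{(z)}(x₁,x₂) = Tr_1^m(x₂ π(x₁)) if Tr_1^k(z) = 1, and define f : F_{2^m} × F_{2^m} × F_{2^k} × F_{2^k} → F_2 by f(x₁,x₂,y,z) = f^{(z)}(x₁,x₂) + Tr_1^k(yz). Then every M-subspace of f has F_2-dimension strictly less than m + k. -/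
/-!
Let `P` be the set of all `x = (x₁, x₂)` such that `(x, y, 0) ∈ U` for some `y`. In a direction
`(a, y, 0)` the term `Tr(yz)` is affine, so it disappears from second derivatives, and `P` is an
`M`-subspace of *every* `f^{(z)}`, that is, of both `Tr(x₁ π(x₂))` and `Tr(x₂ π(x₁))`. For the first
function, Property (P) forces two directions `a, b ∈ P` to be linearly dependent unless
`a₂ = b₂ = 0`; for the second, unless `a₁ = b₁ = 0`. Hence `dim P ≤ 1`, and forgetting the `y` and
`z` coordinates costs at most `2k` dimensions, so `dim U ≤ 2k + 1 < m + k`.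
-/

open Module

section DimensionCounting

theorem finrank_le_one_of_forall_eq_zero_or_eq {R M : Type*} [Semiring R] [StrongRankCondition R]
    [AddCommMonoid M] [Module R M] (h : ∀ a b : M, a = 0 ∨ b = 0 ∨ a = b) : finrank R M ≤ 1 := by
  rcases subsingleton_or_nontrivial M with _ | _
  · exact finrank_le_one 0 fun w ↦ ⟨0, Subsingleton.elim _ w⟩
  · obtain ⟨v, hv⟩ := exists_ne (0 : M)
    refine finrank_le_one v fun w ↦ ?_
    rcases h w v with rfl | hv' | rfl
    · exact ⟨0, zero_smul R v⟩
    · exact absurd hv' hv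
    · exact ⟨1, one_smul R w⟩

variable {K V Y Z : Type*} [DivisionRing K] [AddCommGroup V] [Module K V]
  [AddCommGroup Y] [Module K Y] [AddCommGroup Z] [Module K Z]

theorem finrank_map_add_finrank_inf_ker (g : V →ₗ[K] Z) (U : Submodule K V)
    [FiniteDimensional K U] :
    finrank K (U.map g) + finrank K (U ⊓ g.ker : Submodule K V) = finrank K U := by
  rw [← (g.domRestrict U).finrank_range_add_finrank_ker, LinearMap.range_domRestrict,
    ← Submodule.finrank_map_subtype_eq U (g.domRestrict U).ker, LinearMap.ker_domRestrict,
    Submodule.map_comap_subtype]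

/-- The projection to the first coordinate of the fiber of `U` over `0` in the last coordinate,
that is, `{x | ∃ y, (x, y, 0) ∈ U}`. For an `M`-subspace `U` of a concatenation of functions on `V`
indexed by `Z`, it is a common `M`-subspace of all of them. -/
def zeroFiberProj (U : Submodule K (V × Y × Z)) : Submodule K V :=
  (U ⊓ (LinearMap.snd K Y Z ∘ₗ LinearMap.snd K V (Y × Z)).ker).map (LinearMap.fst K V (Y × Z))

theorem mem_zeroFiberProj {U : Submodule K (V × Y × Z)} {x : V} :
    x ∈ zeroFiberProj U ↔ ∃ y, (x, y, 0) ∈ U := by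
  simp [zeroFiberProj]

theorem finrank_le_finrank_zeroFiberProj_add [FiniteDimensional K Y] [FiniteDimensional K Z]
    (U : Submodule K (V × Y × Z)) [FiniteDimensional K U] :
    finrank K U ≤ finrank K (zeroFiberProj U) + finrank K Y + finrank K Z := by
  let projZ := LinearMap.snd K Y Z ∘ₗ LinearMap.snd K V (Y × Z)
  let projV := LinearMap.fst K V (Y × Z)
  let inclY : Y →ₗ[K] V × Y × Z := LinearMap.inr K V (Y × Z) ∘ₗ LinearMap.inl K Y Z
  have split_Z := finrank_map_add_finrank_inf_ker projZ U
  have split_V : finrank K (zeroFiberProj U) +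
      finrank K (U ⊓ projZ.ker ⊓ projV.ker : Submodule K (V × Y × Z)) =
        finrank K (U ⊓ projZ.ker : Submodule K (V × Y × Z)) :=
    finrank_map_add_finrank_inf_ker projV (U ⊓ projZ.ker)
  have inf_ker_le : U ⊓ projZ.ker ⊓ projV.ker ≤ inclY.range := by
    rintro ⟨x, y, z⟩ ⟨⟨-, hz : z = 0⟩, hx : x = 0⟩
    exact ⟨y, by simp [inclY, hx, hz]⟩
  have finrank_Z := Submodule.finrank_le (U.map projZ)
  have finrank_Y := (Submodule.finrank_mono inf_ker_le).trans inclY.finrank_range_le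
  lia

end DimensionCounting

section MSubspaces

variable {V W Y Z : Type*} [AddCommGroup V] [Module (ZMod 2) V] [AddCommGroup W] [Module (ZMod 2) W]
  [AddCommGroup Y] [Module (ZMod 2) Y] [AddCommGroup Z] [Module (ZMod 2) Z]

theorem IsMSubspace.comap {f : V → ZMod 2} {U : Submodule (ZMod 2) V} (hU : IsMSubspace f U)
    (L : W →ₗ[ZMod 2] V) : IsMSubspace (f ∘ L) (U.comap L) := fun a ha b hb x ↦ by
  simpa only [D2, Function.comp_apply, map_add] using hU (L a) ha (L b) hb (L x)

theorem IsMSubspace.zeroFiberProj {f : V × Y × Z → ZMod 2} {g : Z → V → ZMod 2}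
    {β : Z → Dual (ZMod 2) Y} (hf : ∀ x y z, f (x, y, z) = g z x + β z y)
    {U : Submodule (ZMod 2) (V × Y × Z)} (hU : IsMSubspace f U) (z : Z) :
    IsMSubspace (g z) (zeroFiberProj U) := by
  intro a ha b hb x
  obtain ⟨y, hay⟩ := mem_zeroFiberProj.1 ha
  obtain ⟨y', hby'⟩ := mem_zeroFiberProj.1 hb
  have hD2 := hU _ hay _ hby' (x, 0, z)
  simp only [D2, Prod.mk_add_mk, hf, add_zero, zero_add, map_add, map_zero] at hD2 ⊢
  linear_combination hD2 - CharTwo.add_self_eq_zero (β z y) - CharTwo.add_self_eq_zero (β z y')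

end MSubspaces

section TraceMaioranaMcFarland

/-- The Maiorana–McFarland function `(x₁, x₂) ↦ Tr(x₁ π(x₂))`, with `Tr` the trace of `F` over
`𝔽₂`. -/
noncomputable def traceMM {F E : Type*} [CommRing F] [Algebra (ZMod 2) F] (π : E → F) :
    F × E → ZMod 2 :=
  fun x ↦ Algebra.trace (ZMod 2) F (x.1 * π x.2)

theorem D2_traceMM {F E : Type*} [CommRing F] [Algebra (ZMod 2) F] [AddCommGroup E] (π : E → F)
    (a b x : F × E) :
    D2 (traceMM π) a b x =
      Algebra.trace (ZMod 2) F
          (x.1 * (π x.2 + π (x.2 + a.2) + π (x.2 + b.2) + π (x.2 + a.2 + b.2))) +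
        Algebra.trace (ZMod 2) F
          (a.1 * π (x.2 + a.2) + b.1 * π (x.2 + b.2) + (a.1 + b.1) * π (x.2 + a.2 + b.2)) := by
  simp only [D2, traceMM, Prod.fst_add, Prod.snd_add, ← map_add]
  congr 1
  ring

theorem forall_D2_traceMM_eq_zero_iff {F E : Type*} [Field F] [Algebra (ZMod 2) F]
    [FiniteDimensional (ZMod 2) F] [AddCommGroup E] (π : E → F) (a b : F × E) :
    (∀ x, D2 (traceMM π) a b x = 0) ↔
      (∀ x, π x + π (x + a.2) + π (x + b.2) + π (x + a.2 + b.2) = 0) ∧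
      ∀ x, Algebra.trace (ZMod 2) F
        (a.1 * π (x + a.2) + b.1 * π (x + b.2) + (a.1 + b.1) * π (x + a.2 + b.2)) = 0 := by
  simp only [D2_traceMM]
  refine ⟨fun h ↦ ?_, fun ⟨hsum, htrace⟩ x ↦ by rw [hsum, htrace, mul_zero, map_zero, add_zero]⟩
  have htrace (x : E) := by simpa only [zero_mul, map_zero, zero_add] using h (0, x)
  refine ⟨fun x ↦ (traceForm_nondegenerate (ZMod 2) F).2 _ fun t ↦ ?_, htrace⟩
  simpa only [htrace, add_zero, Algebra.traceForm_apply] using h (t, x)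

end TraceMaioranaMcFarland

namespace PropertyP

variable {m : ℕ} {π : GaloisField 2 m → GaloisField 2 m}

theorem dependent_or_snd_eq_zero (hP : PropertyP m π) {a b : GaloisField 2 m × GaloisField 2 m}
    (h : ∀ x, D2 (traceMM π) a b x = 0) :
    (a = 0 ∨ b = 0 ∨ a = b) ∨ a.2 = 0 ∧ b.2 = 0 := by
  simpa only [Prod.ext_iff, Prod.fst_zero, Prod.snd_zero, or_assoc] using
    (hP a.1 a.2 b.1 b.2).1 ((forall_D2_traceMM_eq_zero_iff π a b).1 h)

theorem finrank_le_one_of_isMSubspace (hP : PropertyP m π)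
    {W : Submodule (ZMod 2) (GaloisField 2 m × GaloisField 2 m)}
    (hW : IsMSubspace (traceMM π) W) (hW_swap : IsMSubspace (traceMM π ∘ Prod.swap) W) :
    finrank (ZMod 2) W ≤ 1 := by
  refine finrank_le_one_of_forall_eq_zero_or_eq fun ⟨a, ha⟩ ⟨b, hb⟩ ↦ ?_
  suffices a = 0 ∨ b = 0 ∨ a = b by simpa only [Submodule.mk_eq_zero, Subtype.mk.injEq]
  rcases hP.dependent_or_snd_eq_zero (hW a ha b hb) with hdep | ⟨ha₂, -⟩
  · exact hdep
  have hD2_swap (x) : D2 (traceMM π) a.swap b.swap x = 0 := hW_swap a ha b hb x.swap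
  rcases hP.dependent_or_snd_eq_zero hD2_swap with hdep | ⟨ha₁, -⟩
  · simpa only [Prod.swap_eq_iff_eq_swap, Prod.swap_zero, Prod.swap_swap] using hdep
  · exact .inl (Prod.ext ha₁ ha₂)

end PropertyP

theorem GMM_from_propertyP_outside_MM_general {m : ℕ} {π : GaloisField 2 m → GaloisField 2 m}
    (hP : PropertyP m π) {Y Z : Type*} [AddCommGroup Y] [Module (ZMod 2) Y]
    [FiniteDimensional (ZMod 2) Y] [AddCommGroup Z] [Module (ZMod 2) Z]
    [FiniteDimensional (ZMod 2) Z] {ε : Z → ZMod 2} (hε_zero : ∃ z, ε z = 0)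
    (hε_ne_zero : ∃ z, ε z ≠ 0) (β : Z → Dual (ZMod 2) Y)
    {f : GaloisField 2 m × GaloisField 2 m × Y × Z → ZMod 2}
    (hf : ∀ x₁ x₂ y z, f (x₁, x₂, y, z) =
      (if ε z = 0 then Tr m (x₁ * π x₂) else Tr m (x₂ * π x₁)) + β z y)
    {U : Submodule (ZMod 2) (GaloisField 2 m × GaloisField 2 m × Y × Z)} (hU : IsMSubspace f U) :
    finrank (ZMod 2) U ≤ finrank (ZMod 2) Y + finrank (ZMod 2) Z + 1 := by
  let e := LinearEquiv.prodAssoc (ZMod 2) (GaloisField 2 m) (GaloisField 2 m) (Y × Z)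
  let g (z : Z) := if ε z = 0 then traceMM π else traceMM π ∘ Prod.swap
  have hfg (x y z) : (f ∘ e) (x, y, z) = g z x + β z y :=
    (hf x.1 x.2 y z).trans (by by_cases hz : ε z = 0 <;> simp [g, hz, traceMM, Tr])
  have hproj := (hU.comap e.toLinearMap).zeroFiberProj hfg
  obtain ⟨z₀, hz₀⟩ := hε_zero
  obtain ⟨z₁, hz₁⟩ := hε_ne_zero
  have finrank_proj : finrank (ZMod 2) (zeroFiberProj (U.comap e.toLinearMap)) ≤ 1 :=
    hP.finrank_le_one_of_isMSubspace (by simpa only [g, if_pos hz₀] using hproj z₀)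
      (by simpa only [g, if_neg hz₁] using hproj z₁)
  have finrank_comap : finrank (ZMod 2) (U.comap e.toLinearMap) = finrank (ZMod 2) U := by
    rw [Submodule.comap_equiv_eq_map_symm, LinearEquiv.finrank_map_eq]
  have := finrank_le_finrank_zeroFiberProj_add (U.comap e.toLinearMap)
  lia

/-- Theorem 3.6: a generalized Maiorana–McFarland function built from
`Tr(x₁ π(x₂))` and `Tr(x₂ π(x₁))`, for a permutation `π` satisfying Property (P), has
no `M`-subspace of dimension `m + k`, hence is not in the completed
Maiorana–McFarland class. -/
theorem GMM_from_propertyP_outside_MM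
    (m k : ℕ) (hk : 0 < k) (hmk : m > k + 2)
    (π : GaloisField 2 m → GaloisField 2 m) (hπ : Function.Bijective π)
    (hP : PropertyP m π)
    (f : GaloisField 2 m × GaloisField 2 m × GaloisField 2 k × GaloisField 2 k → ZMod 2)
    (hf : ∀ (x₁ x₂ : GaloisField 2 m) (y z : GaloisField 2 k),
      f (x₁, x₂, y, z) =
        (if Tr k z = 0 then Tr m (x₁ * π x₂) else Tr m (x₂ * π x₁)) + Tr k (y * z)) :
    ∀ U : Submodule (ZMod 2)
        (GaloisField 2 m × GaloisField 2 m × GaloisField 2 k × GaloisField 2 k),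
      IsMSubspace f U → Module.finrank (ZMod 2) U < m + k := by
  intro U hU
  have hTr : ∃ z, Tr k z ≠ 0 := DFunLike.ne_iff.1 (Algebra.trace_ne_zero (ZMod 2) (GaloisField 2 k))
  have finrank_U := GMM_from_propertyP_outside_MM_general hP ⟨0, map_zero _⟩ hTr
    (Algebra.traceForm (ZMod 2) (GaloisField 2 k))
    (fun x₁ x₂ y z ↦ by rw [hf, mul_comm y z]; rfl) hU
  rw [GaloisField.finrank 2 hk.ne'] at finrank_U
  lia
end

section
/- Let m ≥ 4 and let c, d be nonzero elements of F_{2^m}. Then there exist x₀, x₁ ∈ F_{2^m} \ {0, c} such that Tr_1^m(d·(x₀⁻¹ + (x₀ + c)⁻¹)) = 0 and Tr_1^m(d·(x₁⁻¹ + (x₁ + c)⁻¹)) = 1; in particular the function x ↦ Tr_1^m(d·(x⁻¹ + (x+c)⁻¹)) does not vanish identically on F_{2^m} \ {0, c}. -/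
/-!
Substituting `x = c * t` turns `d * (x⁻¹ + (x + c)⁻¹)` into `e / (t ^ 2 + t)` with `e = d / c`, and
by Artin–Schreier `t ^ 2 + t` runs through all elements of trace `0`. So we need a nonzero `u` of
trace `0` for which `e / u` has a prescribed trace.

Let `a` and `s` have trace `0`. Then so has `b = a + s ^ 2`, and `e / a + e / b` equals
`u = e * s ^ 2 / (a * b)`. If `e / a` and `e / b` have different traces, then `a` and `b` realise
both values. Otherwise `u` has trace `0`, and `e / u = (a / s) ^ 2 + a` has the same trace as
`a / s`. When `s ∉ {0, 1}` the traces of `a` and `a / s` are independent, so each pair of values is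
attained by at least four `a`, of which only `0` and `s ^ 2` have to be avoided.
-/

open Algebra Module

theorem exists_notMem_apply_eq_of_surjective {G H Φ : Type*} [AddGroup G] [AddGroup H]
    [FunLike Φ G H] [AddMonoidHomClass Φ G H] {f : Φ} (hf : Function.Surjective f) {s : Finset G}
    (hs : s.card * Nat.card H < Nat.card G) (y : H) : ∃ x ∉ s, f x = y := by
  obtain ⟨x₀, rfl⟩ := hf y
  let φ : G →+ H := f
  by_contra! h
  have fiber_subset : (x₀ + ·) '' (φ.ker : Set G) ⊆ s := by
    rintro _ ⟨k, hk : f k = 0, rfl⟩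
    by_contra hks
    exact h _ hks (by rw [map_add, hk, add_zero])
  have card_ker_le : Nat.card φ.ker ≤ s.card := by
    have := Set.ncard_le_ncard fiber_subset
    rwa [Set.ncard_image_of_injective _ (add_right_injective x₀), Set.ncard_coe_finset] at this
  have card_ker_mul : Nat.card φ.ker * Nat.card H = Nat.card G := by
    rw [← φ.ker.card_mul_index, AddSubgroup.index_ker, φ.range_eq_top_of_surjective hf,
      AddSubgroup.card_top]
  exact hs.not_ge (card_ker_mul ▸ Nat.mul_le_mul_right _ card_ker_le)

section Separable

variable {K L ι : Type*} [Field K] [Field L] [Algebra K L] [FiniteDimensional K L]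
  [Algebra.IsSeparable K L]

theorem surjective_pi_traceForm_of_linearIndependent {v : ι → L} (hv : LinearIndependent K v) :
    Function.Surjective (LinearMap.pi fun i ↦ traceForm K L (v i)) := by
  have := hv.finite
  cases nonempty_fintype ι
  classical
  rw [← LinearMap.dualMap_injective_iff, injective_iff_map_eq_zero]
  intro φ hφ
  have sum_eq_zero : ∑ i, φ (fun j ↦ if i = j then 1 else 0) • v i = 0 := by
    refine (traceForm_nondegenerate K L).1 _ fun x ↦ ?_
    have := LinearMap.congr_fun hφ x
    rw [LinearMap.dualMap_apply, LinearMap.pi_apply_eq_sum_univ] at this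
    simpa [mul_comm] using this
  have coeff_eq_zero := Fintype.linearIndependent_iff.mp hv _ sum_eq_zero
  exact LinearMap.ext fun k ↦ by simp [φ.pi_apply_eq_sum_univ k, coeff_eq_zero]

end Separable

section FiniteField

variable {K L : Type*} [Field K] [Fintype K] [Field L] [Finite L] [Algebra K L]

theorem trace_pow_card (x : L) : trace K L (x ^ Fintype.card K) = trace K L x :=
  trace_eq_of_algEquiv (FiniteField.frobeniusAlgEquivOfAlgebraic K L) x

theorem pow_card_eq_self_iff_mem_range_algebraMap {x : L} :
    x ^ Fintype.card K = x ↔ x ∈ Set.range (algebraMap K L) := by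
  refine ⟨fun hx ↦ (IsGalois.mem_range_algebraMap_iff_fixed x).mpr fun σ ↦ ?_, ?_⟩
  · obtain ⟨i, rfl⟩ := (FiniteField.bijective_frobeniusAlgEquivOfAlgebraic_pow K L).2 σ
    rw [AlgEquiv.coe_pow]
    exact Function.iterate_fixed hx i
  · rintro ⟨k, rfl⟩
    rw [← map_pow, FiniteField.pow_card]

theorem finrank_ker_frobenius_sub_id :
    finrank K (LinearMap.ker ((FiniteField.frobeniusAlgHom K L).toLinearMap - .id)) = 1 := by
  have ker_eq : LinearMap.ker ((FiniteField.frobeniusAlgHom K L).toLinearMap - .id) =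
      LinearMap.range (Algebra.linearMap K L) := by
    ext x
    simpa [sub_eq_zero] using pow_card_eq_self_iff_mem_range_algebraMap (K := K) (x := x)
  rw [ker_eq, LinearMap.finrank_range_of_inj (algebraMap K L).injective, finrank_self]

theorem range_frobenius_sub_id_eq_ker_trace :
    LinearMap.range ((FiniteField.frobeniusAlgHom K L).toLinearMap - .id) =
      LinearMap.ker (trace K L) := by
  refine Submodule.eq_of_le_of_finrank_eq ?_ ?_
  · rintro _ ⟨x, rfl⟩
    simp [trace_pow_card]
  · have h_frob := LinearMap.finrank_range_add_finrank_ker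
      ((FiniteField.frobeniusAlgHom K L).toLinearMap - .id)
    have h_trace := LinearMap.finrank_range_add_finrank_ker (trace K L)
    rw [finrank_ker_frobenius_sub_id] at h_frob
    rw [LinearMap.range_eq_top.mpr (trace_surjective K L), finrank_top, finrank_self] at h_trace
    lia

theorem exists_pow_card_sub_self_eq_iff_trace_eq_zero {u : L} :
    (∃ t : L, t ^ Fintype.card K - t = u) ↔ trace K L u = 0 := by
  rw [← LinearMap.mem_ker, ← range_frobenius_sub_id_eq_ker_trace]
  rfl

end FiniteField

section CharTwo

variable {F : Type*} [Field F] [Finite F] [Algebra (ZMod 2) F]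

theorem trace_sq (x : F) : trace (ZMod 2) F (x ^ 2) = trace (ZMod 2) F x := by
  simpa using trace_pow_card (K := ZMod 2) x

theorem exists_trace_div_eq_trace_div {e s a : F} (he : e ≠ 0) (hs : s ≠ 0) (ha : a ≠ 0)
    (has : a ≠ s ^ 2) (hTs : trace (ZMod 2) F s = 0) (hTa : trace (ZMod 2) F a = 0) :
    ∃ u ≠ 0, trace (ZMod 2) F u = 0 ∧ trace (ZMod 2) F (e / u) = trace (ZMod 2) F (a / s) := by
  have : CharP F 2 := charP_of_injective_algebraMap' (ZMod 2) 2
  have hb : a + s ^ 2 ≠ 0 := fun h ↦ has (CharTwo.add_eq_zero.mp h)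
  have hTb : trace (ZMod 2) F (a + s ^ 2) = 0 := by rw [map_add, trace_sq, hTa, hTs, add_zero]
  by_cases hT : trace (ZMod 2) F (e / a) = trace (ZMod 2) F (e / (a + s ^ 2))
  · refine ⟨e * s ^ 2 / (a * (a + s ^ 2)), ?_, ?_, ?_⟩
    · exact div_ne_zero (mul_ne_zero he (pow_ne_zero 2 hs)) (mul_ne_zero ha hb)
    · have : e * s ^ 2 / (a * (a + s ^ 2)) = e / a + e / (a + s ^ 2) := by
        field_simp
        linear_combination (-a) * CharTwo.two_eq_zero (R := F)
      rw [this, map_add, hT, CharTwo.add_self_eq_zero]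
    · have : e / (e * s ^ 2 / (a * (a + s ^ 2))) = (a / s) ^ 2 + a := by field_simp
      rw [this, map_add, trace_sq, hTa, add_zero]
  · have eq_or_eq : ∀ i j k : ZMod 2, i ≠ j → i = k ∨ j = k := by decide
    rcases eq_or_eq _ _ (trace (ZMod 2) F (a / s)) hT with h | h
    · exact ⟨a, ha, hTa, h⟩
    · exact ⟨a + s ^ 2, hb, hTb, h⟩

theorem exists_trace_eq_zero_and_trace_div_eq (hF : 4 ≤ finrank (ZMod 2) F) {e : F} (he : e ≠ 0)
    (j : ZMod 2) : ∃ u ≠ 0, trace (ZMod 2) F u = 0 ∧ trace (ZMod 2) F (e / u) = j := by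
  classical
  have eight_lt_card : 8 < Nat.card F := by
    rw [natCard_eq_pow_finrank (K := ZMod 2), Nat.card_zmod]
    exact (by norm_num : 8 < 2 ^ 4).trans_le (Nat.pow_le_pow_right two_pos hF)
  obtain ⟨s, hs, hTs⟩ := exists_notMem_apply_eq_of_surjective
    (trace_surjective (ZMod 2) F) (s := {0, 1})
    (by grw [Finset.card_le_two, ← eight_lt_card]; simp) 0
  obtain ⟨hs₀, hs₁⟩ : s ≠ 0 ∧ s ≠ 1 := by simpa using hs
  have linearIndependent_one_inv : LinearIndependent (ZMod 2) ![1, s⁻¹] := by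
    rw [LinearIndependent.pair_iff' one_ne_zero]
    intro k
    obtain rfl | rfl : k = 0 ∨ k = 1 := by decide +revert
    · simpa [eq_comm] using hs₀
    · simpa [eq_comm] using hs₁
  obtain ⟨a, ha, hTa⟩ := exists_notMem_apply_eq_of_surjective
    (surjective_pi_traceForm_of_linearIndependent linearIndependent_one_inv) (s := {0, s ^ 2})
    (by grw [Finset.card_le_two, ← eight_lt_card]; simp) ![0, j]
  obtain ⟨ha₀, has⟩ : a ≠ 0 ∧ a ≠ s ^ 2 := by simpa using ha
  obtain ⟨u, hu, hTu, huj⟩ := exists_trace_div_eq_trace_div he hs₀ ha₀ has hTs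
    (by simpa using congrFun hTa 0)
  refine ⟨u, hu, hTu, huj.trans ?_⟩
  simpa [div_eq_inv_mul] using congrFun hTa 1

theorem trace_inverse_sum_not_identically_zero_general (hF : 4 ≤ finrank (ZMod 2) F) {c d : F}
    (hc : c ≠ 0) (hd : d ≠ 0) (j : ZMod 2) :
    ∃ x, x ≠ 0 ∧ x ≠ c ∧ trace (ZMod 2) F (d * (x⁻¹ + (x + c)⁻¹)) = j := by
  have : CharP F 2 := charP_of_injective_algebraMap' (ZMod 2) 2
  obtain ⟨u, hu, hTu, huj⟩ := exists_trace_eq_zero_and_trace_div_eq hF (div_ne_zero hd hc) j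
  obtain ⟨t, rfl⟩ : ∃ t, t * (t + 1) = u := by
    obtain ⟨t, ht⟩ := exists_pow_card_sub_self_eq_iff_trace_eq_zero.mpr hTu
    exact ⟨t, by rw [← ht, ZMod.card, CharTwo.sub_eq_add]; ring⟩
  obtain ⟨ht₀, ht₁⟩ := mul_ne_zero_iff.mp hu
  refine ⟨c * t, mul_ne_zero hc ht₀, fun h ↦ ht₁ ?_, ?_⟩
  · rw [mul_eq_left₀ hc] at h
    rw [h, CharTwo.add_self_eq_zero]
  · have inv_sum_eq : d * ((c * t)⁻¹ + (c * t + c)⁻¹) = d / c / (t * (t + 1)) := by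
      rw [← mul_add_one]
      field_simp
      linear_combination t * CharTwo.two_eq_zero (R := F)
    rw [inv_sum_eq, huj]

end CharTwo

/-- Lemma 3.7: for `m ≥ 4` and nonzero `c, d ∈ F_{2^m}`, the function
`x ↦ Tr(d (x⁻¹ + (x+c)⁻¹))` takes both values `0` and `1` on `F_{2^m} \ {0, c}`;
in particular it does not vanish identically there. -/
theorem trace_inverse_sum_not_identically_zero
    (m : ℕ) (hm : 4 ≤ m) (c d : GaloisField 2 m) (hc : c ≠ 0) (hd : d ≠ 0) :
    ∃ x₀ x₁ : GaloisField 2 m,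
      x₀ ≠ 0 ∧ x₀ ≠ c ∧ x₁ ≠ 0 ∧ x₁ ≠ c ∧
      Tr m (d * (x₀⁻¹ + (x₀ + c)⁻¹)) = 0 ∧
      Tr m (d * (x₁⁻¹ + (x₁ + c)⁻¹)) = 1 := by
  choose x hx₀ hxc hx using trace_inverse_sum_not_identically_zero_general
    (hm.trans_eq (GaloisField.finrank 2 (by lia)).symm) hc hd
  exact ⟨x 0, x 1, hx₀ 0, hxc 0, hx₀ 1, hxc 1, hx 0, hx 1⟩
end

section
/- Let m ≥ 4 and let π be the permutation of F_{2^m} defined by π(x) = x^{2^m − 2} (i.e., π(x) = x⁻¹ for x ≠ 0 and π(0) = 0). Then π satisfies Property (P). -/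
/-!
Write `℘ y = y ^ 2 - y`. Since `y⁻¹ + (y + 1)⁻¹ = (℘ y)⁻¹` in characteristic two, the heart of the
matter is that a nonzero additive functional `f : F → 𝔽₂` cannot vanish at all the inverses of
elements of the image `S` of `℘`. Both `S` and `ker f` have index two, so otherwise inversion would
exchange them, and Hua's identity `u - (u⁻¹ + (v - u)⁻¹)⁻¹ = u ^ 2 / v` would give `u ^ 2 / v ∈ S`
for all `u, v ∈ S`. As `S` is stable under square roots, it would be closed under division, hence a
subfield of index two, which forces `|F| = 4`.

The first condition of Property (P) says that the second derivative of inversion in the directions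
`a₂`, `b₂` vanishes, which happens only if `a₂`, `b₂` are linearly dependent over `𝔽₂`; in each of
these three cases the second condition reads `f (c * (x⁻¹ + (x + d)⁻¹)) = 0` for all `x`.
-/

section AdditiveSubgroups

variable {F : Type*} [Field F]

theorem sub_inv_inv_add_inv_sub_eq_sq_div {u v : F} (hu : u ≠ 0) (hv : v ≠ 0) (huv : v - u ≠ 0) :
    u - (u⁻¹ + (v - u)⁻¹)⁻¹ = u ^ 2 / v := by
  have inv_add_inv : u⁻¹ + (v - u)⁻¹ = v / (u * (v - u)) := by
    field_simp
    ring
  rw [inv_add_inv]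
  field_simp
  ring

theorem sq_div_mem_of_mem_iff_inv_mem {A B : AddSubgroup F} (hAB : ∀ x, x ∈ B ↔ x⁻¹ ∈ A) {u v : F}
    (hu : u ∈ A) (hv : v ∈ A) : u ^ 2 / v ∈ A := by
  have inv_mem_B {x : F} (hx : x ∈ A) : x⁻¹ ∈ B := by rwa [hAB, inv_inv]
  rcases eq_or_ne u 0 with rfl | hu0
  · simp
  rcases eq_or_ne v 0 with rfl | hv0
  · simp
  rcases eq_or_ne v u with rfl | hvu
  · rwa [sq, mul_self_div_self]
  rw [← sub_inv_inv_add_inv_sub_eq_sq_div hu0 hv0 (sub_ne_zero.mpr hvu)]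
  exact A.sub_mem hu ((hAB _).mp (B.add_mem (inv_mem_B hu) (inv_mem_B (A.sub_mem hv hu))))

theorem exists_subfield_toAddSubgroup_eq {A : AddSubgroup F} (hA : A ≠ ⊥)
    (hdiv : ∀ u ∈ A, ∀ v ∈ A, u / v ∈ A) : ∃ K : Subfield F, K.toAddSubgroup = A := by
  obtain ⟨g, hg, hg0⟩ := A.bot_or_exists_ne_zero.resolve_left hA
  have one_mem : 1 ∈ A := div_self hg0 ▸ hdiv g hg g hg
  have inv_mem (u : F) (hu : u ∈ A) : u⁻¹ ∈ A := one_div u ▸ hdiv 1 one_mem u hu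
  have mul_mem {u v : F} (hu : u ∈ A) (hv : v ∈ A) : u * v ∈ A :=
    div_inv_eq_mul u v ▸ hdiv u hu v⁻¹ (inv_mem v hv)
  exact ⟨{ A with mul_mem' := mul_mem, one_mem' := one_mem, inv_mem' := inv_mem }, rfl⟩

theorem card_eq_sq_of_index_toAddSubgroup_eq_prime [Finite F] {p : ℕ} (hp : p.Prime)
    {K : Subfield F} (hK : K.toAddSubgroup.index = p) : Nat.card F = p ^ 2 := by
  have card_mul : Nat.card K * p = Nat.card F := hK ▸ K.toAddSubgroup.card_mul_index
  have card_pow : Nat.card F = Nat.card K ^ Module.finrank K F := Module.natCard_eq_pow_finrank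
  obtain ⟨d, hd⟩ := Nat.exists_eq_succ_of_ne_zero (Module.finrank_pos (R := K) (M := F)).ne'
  have pow_eq : Nat.card K ^ d = p := by
    refine Nat.eq_of_mul_eq_mul_left (Nat.card_pos (α := K)) ?_
    rw [card_mul, card_pow, hd, Nat.pow_succ']
  have card_K : Nat.card K = p := (hp.pow_eq_iff.mp pow_eq).1
  rw [← card_mul, card_K, sq]

theorem index_ker_eq_of_ne_zero {G : Type*} [AddGroup G] {p : ℕ} [Fact p.Prime] {f : G →+ ZMod p}
    (hf : f ≠ 0) : f.ker.index = p := by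
  have range_eq_top : f.range = ⊤ :=
    (eq_bot_or_eq_top f.range).resolve_left (mt AddMonoidHom.range_eq_bot_iff.mp hf)
  rw [AddSubgroup.index_ker, range_eq_top, AddSubgroup.card_top, Nat.card_zmod]

end AdditiveSubgroups

section ArtinSchreier

/-- The Artin–Schreier map `℘ y = y ^ p - y` of a ring of characteristic `p`, as an additive
endomorphism. -/
def artinSchreier (R : Type*) [CommRing R] (p : ℕ) [ExpChar R p] : R →+ R :=
  (frobenius R p).toAddMonoidHom - AddMonoidHom.id R

theorem artinSchreier_apply {R : Type*} [CommRing R] (p : ℕ) [ExpChar R p] (y : R) :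
    artinSchreier R p y = y ^ p - y :=
  rfl

theorem exists_mem_range_artinSchreier_pow_eq {R : Type*} [CommRing R] {p : ℕ} [ExpChar R p]
    [PerfectRing R p] {u : R} (hu : u ∈ (artinSchreier R p).range) :
    ∃ v ∈ (artinSchreier R p).range, v ^ p = u := by
  obtain ⟨y, rfl⟩ := hu
  obtain ⟨z, rfl⟩ := surjective_frobenius R p y
  refine ⟨artinSchreier R p z, ⟨z, rfl⟩, ?_⟩
  simp only [artinSchreier_apply, frobenius_def, sub_pow_expChar]

variable {F : Type*} [Field F] {p : ℕ} [Fact p.Prime] [CharP F p]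

theorem ker_artinSchreier : (artinSchreier F p).ker = (⊥ : Subfield F).toAddSubgroup := by
  ext y
  change artinSchreier F p y = 0 ↔ y ∈ (⊥ : Subfield F)
  rw [artinSchreier_apply, sub_eq_zero, Subfield.mem_bot_iff_pow_eq_self F p]

theorem index_range_artinSchreier [Finite F] : (artinSchreier F p).range.index = p := by
  have card_ker : Nat.card (artinSchreier F p).ker = p := by
    rw [ker_artinSchreier]
    exact Subfield.card_bot F p
  have card_ker_mul := (artinSchreier F p).ker.card_mul_index
  rw [AddSubgroup.index_ker, card_ker, mul_comm,
    ← (artinSchreier F p).range.card_mul_index] at card_ker_mul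
  exact (Nat.eq_of_mul_eq_mul_left Nat.card_pos card_ker_mul).symm

theorem mem_ker_iff_inv_mem_range_artinSchreier [Finite F] {f : F →+ ZMod p} (hf : f ≠ 0)
    (hvanish : ∀ y, f (artinSchreier F p y)⁻¹ = 0) (x : F) :
    x ∈ f.ker ↔ x⁻¹ ∈ (artinSchreier F p).range := by
  set S := (artinSchreier F p).range
  have card_eq : Nat.card f.ker = Nat.card S := by
    refine Nat.eq_of_mul_eq_mul_right (Fact.out : p.Prime).pos ?_
    calc Nat.card f.ker * p = Nat.card F := by
          rw [← f.ker.card_mul_index, index_ker_eq_of_ne_zero hf]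
      _ = Nat.card S * p := by rw [← S.card_mul_index, index_range_artinSchreier]
  have inv_subset : (S : Set F)⁻¹ ⊆ f.ker := by
    rintro x ⟨y, hy⟩
    rw [← inv_inv x, ← hy]
    exact hvanish y
  have inv_eq : (S : Set F)⁻¹ = f.ker :=
    Set.eq_of_subset_of_ncard_le inv_subset (by rw [Set.ncard_inv]; exact card_eq.le)
  exact (Set.ext_iff.mp inv_eq x).symm

end ArtinSchreier

section CharTwo

variable {F : Type*} [Field F] [CharP F 2]

theorem exists_map_inv_artinSchreier_ne_zero [Finite F] (hF : 4 < ENat.card F) {f : F →+ ZMod 2}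
    (hf : f ≠ 0) : ∃ y, f (artinSchreier F 2 y)⁻¹ ≠ 0 := by
  by_contra! hvanish
  set S := (artinSchreier F 2).range
  have index_S : S.index = 2 := index_range_artinSchreier
  have four_lt : 4 < Nat.card F := by
    rw [ENat.card_eq_coe_natCard] at hF
    exact_mod_cast hF
  have S_ne_bot : S ≠ ⊥ := by
    intro h
    rw [h, AddSubgroup.index_bot] at index_S
    omega
  have div_mem : ∀ u ∈ S, ∀ v ∈ S, u / v ∈ S := by
    intro u hu v hv
    obtain ⟨w, hw, rfl⟩ := exists_mem_range_artinSchreier_pow_eq hu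
    exact sq_div_mem_of_mem_iff_inv_mem (mem_ker_iff_inv_mem_range_artinSchreier hf hvanish) hw hv
  obtain ⟨K, hK⟩ := exists_subfield_toAddSubgroup_eq S_ne_bot div_mem
  have card_eq : Nat.card F = 2 ^ 2 :=
    card_eq_sq_of_index_toAddSubgroup_eq_prime Nat.prime_two (hK ▸ index_S)
  omega

theorem inv_add_inv_add_eq_inv_mul_inv_artinSchreier {d y : F} (hd : d ≠ 0)
    (hy : artinSchreier F 2 y ≠ 0) :
    (d * y)⁻¹ + (d * y + d)⁻¹ = d⁻¹ * (artinSchreier F 2 y)⁻¹ := by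
  have factor : artinSchreier F 2 y = y * (y + 1) := by
    rw [artinSchreier_apply, CharTwo.sub_eq_add]
    ring
  rw [factor] at hy ⊢
  have hy0 : y ≠ 0 := left_ne_zero_of_mul hy
  have hy1 : y + 1 ≠ 0 := right_ne_zero_of_mul hy
  rw [← mul_add_one d y]
  field_simp
  linear_combination y * CharTwo.two_eq_zero (R := F)

theorem forall_map_mul_inv_add_inv_eq_zero_iff [Finite F] (hF : 4 < ENat.card F) {f : F →+ ZMod 2}
    (hf : f ≠ 0) (c d : F) : (∀ x, f (c * (x⁻¹ + (x + d)⁻¹)) = 0) ↔ c = 0 ∨ d = 0 := by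
  refine ⟨fun h => ?_, ?_⟩
  · by_contra! ⟨hc, hd⟩
    let g : F →+ ZMod 2 := f.comp (AddMonoidHom.mulLeft (c * d⁻¹))
    have g_ne_zero : g ≠ 0 := by
      obtain ⟨z, hz⟩ := DFunLike.ne_iff.mp hf
      refine DFunLike.ne_iff.mpr ⟨(c * d⁻¹)⁻¹ * z, ?_⟩
      change f (c * d⁻¹ * ((c * d⁻¹)⁻¹ * z)) ≠ 0
      rwa [mul_inv_cancel_left₀ (mul_ne_zero hc (inv_ne_zero hd))]
    obtain ⟨y, hy⟩ := exists_map_inv_artinSchreier_ne_zero hF g_ne_zero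
    have artinSchreier_ne_zero : artinSchreier F 2 y ≠ 0 :=
      fun h0 => hy (by rw [h0, inv_zero, map_zero])
    apply hy
    change f (c * d⁻¹ * (artinSchreier F 2 y)⁻¹) = 0
    rw [mul_assoc, ← inv_add_inv_add_eq_inv_mul_inv_artinSchreier hd artinSchreier_ne_zero]
    exact h (d * y)
  · rintro (rfl | rfl) x
    · rw [zero_mul, map_zero]
    · rw [add_zero, CharTwo.add_self_eq_zero, mul_zero, map_zero]

theorem inv_add_inv_add_inv_add_inv_eq_div {x a b : F}
    (h : x * (x + a) * (x + b) * (x + a + b) ≠ 0) :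
    x⁻¹ + (x + a)⁻¹ + (x + b)⁻¹ + (x + a + b)⁻¹ =
      a * b * (a + b) / (x * (x + a) * (x + b) * (x + a + b)) := by
  obtain ⟨⟨⟨hx, hxa⟩, hxb⟩, hxab⟩ :
      ((x ≠ 0 ∧ x + a ≠ 0) ∧ x + b ≠ 0) ∧ x + a + b ≠ 0 := by
    simpa only [mul_ne_zero_iff] using h
  field_simp
  linear_combination (2 * x ^ 3 + 3 * x ^ 2 * (a + b) + x * (a ^ 2 + 3 * a * b + b ^ 2)) *
    CharTwo.two_eq_zero (R := F)

theorem forall_inv_add_inv_add_inv_add_inv_eq_zero_iff (hF : 4 < ENat.card F) (a b : F) :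
    (∀ x, x⁻¹ + (x + a)⁻¹ + (x + b)⁻¹ + (x + a + b)⁻¹ = 0) ↔ a = 0 ∨ b = 0 ∨ a = b := by
  refine ⟨fun h => ?_, ?_⟩
  · classical
    obtain ⟨x, hx⟩ : ∃ x, x ∉ ({0, a, b, a + b} : Finset F) := by
      by_contra! hall
      have card_le : ENat.card F ≤ 4 := by
        rw [← Set.encard_univ, ← Set.eq_univ_of_forall (s := (_ : Finset F)) hall,
          Set.encard_coe_eq_coe_finsetCard]
        exact_mod_cast Finset.card_le_four
      exact hF.not_ge card_le
    have denom_ne_zero : x * (x + a) * (x + b) * (x + a + b) ≠ 0 := by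
      simpa [add_assoc, CharTwo.add_eq_zero, and_assoc] using hx
    have num_eq_zero := h x
    rw [inv_add_inv_add_inv_add_inv_eq_div denom_ne_zero,
      div_eq_zero_iff, or_iff_left denom_ne_zero] at num_eq_zero
    simpa only [mul_eq_zero, CharTwo.add_eq_zero, or_assoc] using num_eq_zero
  · rintro (rfl | rfl | rfl) x
    · simp only [add_zero, CharTwo.add_self_eq_zero, zero_add]
    · rw [add_zero, add_zero, add_assoc (x⁻¹ + (x + a)⁻¹), CharTwo.add_self_eq_zero]
    · simp only [CharTwo.add_cancel_right, CharTwo.add_self_eq_zero]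

end CharTwo

theorem pow_card_sub_two_eq_inv {F : Type*} [Field F] [Finite F] (hF : 2 < Nat.card F) (x : F) :
    x ^ (Nat.card F - 2) = x⁻¹ := by
  rcases eq_or_ne x 0 with rfl | hx
  · rw [inv_zero, zero_pow (Nat.sub_ne_zero_of_lt hF)]
  · have := Fintype.ofFinite F
    refine eq_inv_of_mul_eq_one_left ?_
    rw [← pow_succ, ← FiniteField.pow_card_sub_one_eq_one x hx, ← Nat.card_eq_fintype_card]
    congr 1
    omega

theorem inversion_satisfies_propertyP_general {F : Type*} [Field F] [CharP F 2] [Finite F]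
    (hF : 4 < ENat.card F) {f : F →+ ZMod 2} (hf : f ≠ 0)
    {π : F → F} (hπ : ∀ x, π x = x ^ (Nat.card F - 2)) (a₁ a₂ b₁ b₂ : F) :
    ((∀ x, π x + π (x + a₂) + π (x + b₂) + π (x + a₂ + b₂) = 0) ∧
      (∀ x, f (a₁ * π (x + a₂) + b₁ * π (x + b₂) + (a₁ + b₁) * π (x + a₂ + b₂)) = 0)) ↔
    ((a₁ = 0 ∧ a₂ = 0) ∨ (b₁ = 0 ∧ b₂ = 0) ∨ (a₁ = b₁ ∧ a₂ = b₂) ∨ (a₂ = 0 ∧ b₂ = 0)) := by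
  have two_lt : 2 < Nat.card F := by
    rw [ENat.card_eq_coe_natCard] at hF
    exact lt_trans (by norm_num) (Nat.cast_lt.mp hF)
  simp only [hπ, pow_card_sub_two_eq_inv two_lt]
  rw [forall_inv_add_inv_add_inv_add_inv_eq_zero_iff hF]
  have derivative_iff := forall_map_mul_inv_add_inv_eq_zero_iff hF hf
  rcases eq_or_ne a₂ 0 with rfl | ha
  · have collapse (x : F) : a₁ * (x + 0)⁻¹ + b₁ * (x + b₂)⁻¹ + (a₁ + b₁) * (x + 0 + b₂)⁻¹ =
        a₁ * (x⁻¹ + (x + b₂)⁻¹) := by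
      rw [add_zero]
      linear_combination b₁ * (x + b₂)⁻¹ * CharTwo.two_eq_zero (R := F)
    simp only [collapse, derivative_iff]
    grind
  rcases eq_or_ne b₂ 0 with rfl | hb
  · have collapse (x : F) : a₁ * (x + a₂)⁻¹ + b₁ * (x + 0)⁻¹ + (a₁ + b₁) * (x + a₂ + 0)⁻¹ =
        b₁ * (x⁻¹ + (x + a₂)⁻¹) := by
      rw [add_zero, add_zero]
      linear_combination a₁ * (x + a₂)⁻¹ * CharTwo.two_eq_zero (R := F)
    simp only [collapse, derivative_iff]
    grind
  rcases eq_or_ne a₂ b₂ with rfl | hab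
  · have collapse (x : F) : a₁ * (x + a₂)⁻¹ + b₁ * (x + a₂)⁻¹ + (a₁ + b₁) * (x + a₂ + a₂)⁻¹ =
        (a₁ + b₁) * (x⁻¹ + (x + a₂)⁻¹) := by
      rw [CharTwo.add_cancel_right]
      ring
    simp only [collapse, derivative_iff, CharTwo.add_eq_zero]
    grind
  · simp [ha, hb, hab]

theorem four_lt_card_galoisField {m : ℕ} (hm : 3 ≤ m) : 4 < ENat.card (GaloisField 2 m) := by
  rw [ENat.card_eq_coe_natCard, GaloisField.card 2 m (by omega)]
  exact_mod_cast Nat.pow_lt_pow_right (a := 2) (by norm_num) (by omega : 2 < m)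

theorem trace_galoisField_toAddMonoidHom_ne_zero (p : ℕ) [Fact p.Prime] (m : ℕ) :
    (Algebra.trace (ZMod p) (GaloisField p m)).toAddMonoidHom ≠ 0 :=
  fun h => Algebra.trace_ne_zero (ZMod p) (GaloisField p m) (LinearMap.toAddMonoidHom_injective h)

/-- Lemma 3.8: for `m ≥ 4`, the inversion permutation `π(x) = x^{2^m - 2}` of `F_{2^m}`
satisfies Property (P). -/
theorem inversion_satisfies_propertyP
    (m : ℕ) (hm : 4 ≤ m)
    (π : GaloisField 2 m → GaloisField 2 m) (hπ : ∀ x, π x = x ^ (2 ^ m - 2)) :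
    PropertyP m π :=
  inversion_satisfies_propertyP_general (four_lt_card_galoisField (by omega))
    (trace_galoisField_toAddMonoidHom_ne_zero 2 m) (by rwa [GaloisField.card 2 m (by omega)])
end

section
/- Let m and k be positive integers such that gcd(k, m) = 1 and m is odd, and let π be the Gold permutation of F_{2^m} defined by π(x) = x^{2^k + 1}. Then π satisfies Property (P). -/
/-!
Write `π x = σ x * x` with `σ = Frob ^ k`, which generates the Galois group of `F_{2^m} / F_2`
because `gcd(k, m) = 1`; hence `σ` fixes only `F_2`.
The second derivative of `π` in directions `a`, `b` is the constant `σ a * b + σ b * a`. If it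
vanishes and `a ≠ 0`, then `σ` fixes `b / a`, so `b = 0` or `b = a`; condition (i) therefore leaves
only `a₂ = 0`, `b₂ = 0` or `a₂ = b₂`. In each of these cases condition (ii) says that
`Tr (a * (π x + π (x + b)))` vanishes identically for a single coefficient `a` and direction `b`.
If `b ≠ 0`, substituting `x = b * y` and setting `c = a * π b` turns this into
`Tr (c * (σ y + y + 1)) = 0`. Taking `y = 0` gives `Tr c = 0`, so `Tr (c * (σ y - y)) = 0`, and
moving `σ` across the trace form gives `σ c = c`. Thus `c ∈ F_2`, so `Tr c = m * c = c` as `m` is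
odd, and `c = 0`.
-/

section AlgEquiv

variable {R S : Type*} [CommRing R] [CommRing S] [Algebra R S] (σ : S ≃ₐ[R] S)

/-- The Gold function `x ↦ σ x * x` attached to an automorphism `σ`. For `σ` the `k`-th power of
the Frobenius of a field of characteristic two, it is the power map `x ↦ x ^ (2 ^ k + 1)`. -/
def goldMap (x : S) : S := σ x * x

lemma goldMap_second_difference (a b x : S) :
    goldMap σ (x + a + b) - goldMap σ (x + a) - goldMap σ (x + b) + goldMap σ x =
      σ a * b + σ b * a := by
  simp only [goldMap, map_add]
  ring

lemma goldMap_mul_add_self_sub (b y : S) :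
    goldMap σ (b * y + b) - goldMap σ (b * y) = goldMap σ b * (σ y + y + 1) := by
  simp only [goldMap, map_add, map_mul]
  ring

lemma trace_mul_apply_sub_self (c y : S) :
    Algebra.trace R S (c * (σ y - y)) = Algebra.trace R S ((c - σ c) * σ y) := by
  have trace_invariant : Algebra.trace R S (σ c * σ y) = Algebra.trace R S (c * y) := by
    rw [← map_mul, Algebra.trace_eq_of_algEquiv]
  rw [mul_sub, sub_mul, map_sub, map_sub, trace_invariant]

end AlgEquiv

section CyclicExtension

variable {K L : Type*} [Field K] [Field L] [Algebra K L] [FiniteDimensional K L] {σ : Gal(L/K)}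

lemma apply_eq_self_of_trace_mul_apply_sub_self_eq_zero [Algebra.IsSeparable K L] {c : L}
    (h : ∀ y, Algebra.trace K L (c * (σ y - y)) = 0) : σ c = c := by
  suffices c - σ c = 0 from (sub_eq_zero.mp this).symm
  refine (traceForm_nondegenerate K L).1 _ fun z => ?_
  obtain ⟨y, rfl⟩ := σ.surjective z
  rw [Algebra.traceForm_apply, ← trace_mul_apply_sub_self, h]

variable [IsGalois K L]

lemma exists_algebraMap_eq_of_apply_eq_self (hσ : Subgroup.zpowers σ = ⊤) {x : L}
    (hx : σ x = x) : ∃ r : K, algebraMap K L r = x := by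
  have zpowers_le : Subgroup.zpowers σ ≤ MulAction.stabilizer Gal(L/K) x :=
    Subgroup.zpowers_le.mpr hx
  exact IntermediateField.mem_bot.mp <|
    (IsGalois.mem_bot_iff_fixed x).mpr fun τ => zpowers_le (hσ ▸ Subgroup.mem_top τ)

lemma exists_smul_eq_of_apply_mul_eq_apply_mul (hσ : Subgroup.zpowers σ = ⊤) {a b : L}
    (ha : a ≠ 0) (h : σ a * b = σ b * a) : ∃ r : K, r • a = b := by
  have hfixed : σ (b / a) = b / a := by
    rw [map_div₀, div_eq_div_iff ((map_ne_zero σ).mpr ha) ha, ← h, mul_comm]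
  obtain ⟨r, hr⟩ := exists_algebraMap_eq_of_apply_eq_self hσ hfixed
  exact ⟨r, by rw [Algebra.smul_def, hr, div_mul_cancel₀ b ha]⟩

lemma eq_zero_of_trace_mul_apply_sub_self_eq_zero (hσ : Subgroup.zpowers σ = ⊤)
    (hdeg : (Module.finrank K L : K) ≠ 0) {c : L} (hc : Algebra.trace K L c = 0)
    (h : ∀ y, Algebra.trace K L (c * (σ y - y)) = 0) : c = 0 := by
  obtain ⟨r, rfl⟩ := exists_algebraMap_eq_of_apply_eq_self hσ
    (apply_eq_self_of_trace_mul_apply_sub_self_eq_zero h)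
  rw [Algebra.trace_algebraMap, nsmul_eq_mul] at hc
  rw [(mul_eq_zero.mp hc).resolve_left hdeg, map_zero]

lemma eq_zero_of_trace_mul_goldMap_add_eq_zero [CharP L 2] (hσ : Subgroup.zpowers σ = ⊤)
    (hdeg : (Module.finrank K L : K) ≠ 0) {a b : L} (hb : b ≠ 0)
    (h : ∀ x, Algebra.trace K L (a * (goldMap σ x + goldMap σ (x + b))) = 0) : a = 0 := by
  have hgold : goldMap σ b ≠ 0 := mul_ne_zero ((map_ne_zero σ).mpr hb) hb
  set c := a * goldMap σ b with hc
  have htrace (y : L) : Algebra.trace K L (c * (σ y + y + 1)) = 0 := by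
    rw [hc, mul_assoc, ← goldMap_mul_add_self_sub, CharTwo.sub_eq_add, add_comm (goldMap σ _), h]
  have htrace_c : Algebra.trace K L c = 0 := by simpa using htrace 0
  have hc_zero : c = 0 :=
    eq_zero_of_trace_mul_apply_sub_self_eq_zero hσ hdeg htrace_c fun y => by
      simpa [mul_add c _ 1, htrace_c, CharTwo.sub_eq_add] using htrace y
  exact (mul_eq_zero.mp hc_zero).resolve_right hgold

end CyclicExtension

lemma zpowers_frobenius_pow_eq_top {K L : Type*} [Field K] [Fintype K] [Field L] [Finite L]
    [Algebra K L] {k : ℕ} (hk : k.Coprime (Module.finrank K L)) :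
    Subgroup.zpowers (FiniteField.frobeniusAlgEquivOfAlgebraic K L ^ k) = ⊤ := by
  rw [← Subgroup.card_eq_iff_eq_top, Nat.card_zpowers, IsGalois.card_aut_eq_finrank]
  have horder := FiniteField.orderOf_frobeniusAlgEquivOfAlgebraic K L
  rw [Nat.Coprime.orderOf_pow (by rwa [horder, Nat.coprime_comm]), horder]

lemma goldMap_frobenius_pow {K L : Type*} [Field K] [Fintype K] [Field L] [Algebra K L]
    [Algebra.IsAlgebraic K L] (k : ℕ) (x : L) :
    goldMap (FiniteField.frobeniusAlgEquivOfAlgebraic K L ^ k) x =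
      x ^ (Fintype.card K ^ k + 1) := by
  rw [goldMap, AlgEquiv.coe_pow, FiniteField.coe_frobeniusAlgEquivOfAlgebraic_iterate, pow_succ]

lemma eq_zero_or_eq_zero_or_eq_of_goldMap_sum_eq_zero {L : Type*} [Field L] [Finite L]
    [Algebra (ZMod 2) L] {σ : Gal(L/ZMod 2)} (hσ : Subgroup.zpowers σ = ⊤) {a b x : L}
    (h : goldMap σ x + goldMap σ (x + a) + goldMap σ (x + b) + goldMap σ (x + a + b) = 0) :
    a = 0 ∨ b = 0 ∨ a = b := by
  have : CharP L 2 := charP_of_injective_algebraMap' (ZMod 2) 2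
  rcases eq_or_ne a 0 with ha | ha
  · exact Or.inl ha
  have hpolar : σ a * b + σ b * a = 0 := by
    rw [← goldMap_second_difference σ a b x, ← h]
    simp only [CharTwo.sub_eq_add]
    ring
  obtain ⟨r, rfl⟩ := exists_smul_eq_of_apply_mul_eq_apply_mul hσ ha (CharTwo.add_eq_zero.mp hpolar)
  have zero_or_one : ∀ s : ZMod 2, s = 0 ∨ s = 1 := by decide
  rcases zero_or_one r with rfl | rfl <;> simp

section CharTwoParallelogram

variable {G S : Type*} [Ring S] (f : G → S) (u v : S)

lemma weighted_sum_self [Ring G] [CharP G 2] (a x : G) :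
    u * f (x + a) + v * f (x + a) + (u + v) * f (x + a + a) = (u + v) * (f x + f (x + a)) := by
  rw [CharTwo.add_cancel_right, ← add_mul, ← mul_add, add_comm (f (x + a))]

variable [CharP S 2]

lemma weighted_sum_zero_left [AddZeroClass G] (b x : G) :
    u * f (x + 0) + v * f (x + b) + (u + v) * f (x + 0 + b) = u * (f x + f (x + b)) := by
  rw [add_zero, add_mul, add_comm (u * f (x + b)), add_assoc, CharTwo.add_cancel_left, mul_add]

lemma weighted_sum_zero_right [AddZeroClass G] (a x : G) :
    u * f (x + a) + v * f (x + 0) + (u + v) * f (x + a + 0) = v * (f x + f (x + a)) := by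
  simp only [add_zero]
  grind

lemma sum_parallelogram_eq_zero [Ring G] [CharP G 2] {a b : G} (h : a = 0 ∨ b = 0 ∨ a = b)
    (x : G) : f x + f (x + a) + f (x + b) + f (x + a + b) = 0 := by
  rcases h with rfl | rfl | rfl
  · simp only [add_zero, CharTwo.add_cancel_right, CharTwo.add_self_eq_zero]
  · rw [add_zero, add_zero, add_assoc, add_comm (f x), CharTwo.add_self_eq_zero]
  · simp only [CharTwo.add_cancel_right, CharTwo.add_self_eq_zero]

end CharTwoParallelogram

lemma propertyP_of_derivatives_ne_zero {m : ℕ} {π : GaloisField 2 m → GaloisField 2 m}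
    (hsecond : ∀ a b, (∀ x, π x + π (x + a) + π (x + b) + π (x + a + b) = 0) →
      a = 0 ∨ b = 0 ∨ a = b)
    (hcomponent : ∀ c a, a ≠ 0 → (∀ x, Tr m (c * (π x + π (x + a))) = 0) → c = 0) :
    PropertyP m π := by
  intro a₁ a₂ b₁ b₂
  constructor
  · rintro ⟨hi, hii⟩
    rcases hsecond a₂ b₂ hi with rfl | rfl | rfl
    · simp only [weighted_sum_zero_left] at hii
      rcases eq_or_ne b₂ 0 with hb | hb
      · exact Or.inr (Or.inr (Or.inr ⟨rfl, hb⟩))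
      · exact Or.inl ⟨hcomponent a₁ b₂ hb hii, rfl⟩
    · simp only [weighted_sum_zero_right] at hii
      rcases eq_or_ne a₂ 0 with ha | ha
      · exact Or.inr (Or.inr (Or.inr ⟨ha, rfl⟩))
      · exact Or.inr (Or.inl ⟨hcomponent b₁ a₂ ha hii, rfl⟩)
    · simp only [weighted_sum_self] at hii
      rcases eq_or_ne a₂ 0 with ha | ha
      · exact Or.inr (Or.inr (Or.inr ⟨ha, ha⟩))
      · have hsum : a₁ + b₁ = 0 := hcomponent (a₁ + b₁) a₂ ha hii
        exact Or.inr (Or.inr (Or.inl ⟨CharTwo.add_eq_zero.mp hsum, rfl⟩))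
  · intro h
    refine ⟨sum_parallelogram_eq_zero π (by tauto), fun x => ?_⟩
    suffices a₁ * π (x + a₂) + b₁ * π (x + b₂) + (a₁ + b₁) * π (x + a₂ + b₂) = 0 by
      rw [this, Tr, map_zero]
    rcases h with ⟨rfl, rfl⟩ | ⟨rfl, rfl⟩ | ⟨rfl, rfl⟩ | ⟨rfl, rfl⟩
    · rw [weighted_sum_zero_left, zero_mul]
    · rw [weighted_sum_zero_right, zero_mul]
    · rw [weighted_sum_self, CharTwo.add_self_eq_zero, zero_mul]
    · rw [weighted_sum_zero_left, add_zero, CharTwo.add_self_eq_zero, mul_zero]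

/-- Lemma 3.11: for `gcd(k,m) = 1` and `m` odd, the Gold permutation `π(x) = x^{2^k+1}`
of `F_{2^m}` satisfies Property (P). -/
theorem gold_satisfies_propertyP
    (m k : ℕ) (hm : 0 < m) (hk : 0 < k) (hgcd : Nat.gcd k m = 1) (hodd : Odd m)
    (π : GaloisField 2 m → GaloisField 2 m) (hπ : ∀ x, π x = x ^ (2 ^ k + 1)) :
    PropertyP m π := by
  have hfinrank : Module.finrank (ZMod 2) (GaloisField 2 m) = m := GaloisField.finrank 2 hm.ne'
  let σ := FiniteField.frobeniusAlgEquivOfAlgebraic (ZMod 2) (GaloisField 2 m) ^ k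
  have hσ : Subgroup.zpowers σ = ⊤ := zpowers_frobenius_pow_eq_top (by rwa [hfinrank])
  have hdeg : (Module.finrank (ZMod 2) (GaloisField 2 m) : ZMod 2) ≠ 0 := by
    rw [hfinrank, Ne, ZMod.natCast_eq_zero_iff_even, Nat.not_even_iff_odd]
    exact hodd
  obtain rfl : π = goldMap σ := funext fun x => by rw [hπ, goldMap_frobenius_pow, ZMod.card]
  exact propertyP_of_derivatives_ne_zero
    (fun a b h => eq_zero_or_eq_zero_or_eq_of_goldMap_sum_eq_zero hσ (h 0))
    (fun c a ha h => eq_zero_of_trace_mul_goldMap_add_eq_zero hσ hdeg ha h)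
end

section
/- Let m and k be positive integers such that gcd(k, m) = 1, m is odd, and m > k + 2. For z ∈ F_{2^k} define f^{(z)} : F_{2^m} × F_{2^m} → F_2 by f^{(z)}(x₁,x₂) = Tr_1^m(x₁ · x₂^{2^k + 1}) if Tr_1^k(z) = 0 and f^{(z)}(x₁,x₂) = Tr_1^m(x₂ · x₁^{2^k + 1}) if Tr_1^k(z) = 1, and define f : F_{2^m} × F_{2^m} × F_{2^k} × F_{2^k} → F_2 by f(x₁,x₂,y,z) = f^{(z)}(x₁,x₂) + Tr_1^k(yz). Then f is a bent function and every M-subspace of f has F_2-dimension strictly less than m + k. -/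
/-- A Boolean function on a finite `F₂`-vector space is bent if every nonzero derivative
is balanced. -/
def IsBent {V : Type*} [AddCommGroup V] (f : V → ZMod 2) : Prop :=
  ∀ a : V, a ≠ 0 → ∀ c : ZMod 2,
    Nat.card {x : V // f (x + a) + f x = c} = Nat.card V / 2

/-!
Bentness is checked fibrewise. In a direction that moves `z`, the term `Tr(yz)` makes the derivative
affine and nonconstant in `y`. Otherwise the derivative either restricts on every slice of constant
`(y, z)` to a derivative of a Maiorana–McFarland function with a permutation (the Gold map), or is
the linear functional `z ↦ Tr(bz)`.

For the dimension bound, cut an `M`-subspace `U` with the hyperplane `Tr(z) = 0`. Directions in this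
hyperplane do not switch between the two Maiorana–McFarland functions, and for `a, b` in it the
second derivatives of `f` contain `Tr(x₁ · D_a D_b π(x₂))` on the slices with `Tr(z) = 0` and
`Tr(x₂ · D_a D_b π(x₁))` on the others. For distinct nonzero `a, b` the map `D_a D_b π` does not
vanish at `0`: otherwise `a^{2^k} b = b^{2^k} a`, which puts `a / b` into
`F_{2^k} ∩ F_{2^m} = F_2`. So both projections of the cut to `F_{2^m}` have dimension at most one
and `dim U ≤ 1 + (1 + 1 + k + (k - 1)) = 2k + 2 < m + k`.
-/

section Balanced

variable {V A B : Type*}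

/-- A Boolean function on a finite set is balanced if it takes both values equally often. Doubling
the count, rather than halving the size of the domain, avoids truncated division. -/
def IsBalanced (g : V → ZMod 2) : Prop :=
  ∀ c, 2 * Nat.card {x // g x = c} = Nat.card V

theorem card_fiber_add_card_fiber_add_one [Finite V] (g : V → ZMod 2) (c : ZMod 2) :
    Nat.card {x // g x = c} + Nat.card {x // g x = c + 1} = Nat.card V := by
  have eq_add_one_iff_ne : ∀ s t : ZMod 2, s = t + 1 ↔ ¬s = t := by decide
  simp only [eq_add_one_iff_ne]
  rw [← Nat.card_sum]
  exact Nat.card_congr (Equiv.sumCompl _)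

theorem isBalanced_of_apply_add [AddGroup V] [Finite V] {g : V → ZMod 2} (u : V)
    (h : ∀ x, g (x + u) = g x + 1) : IsBalanced g := by
  intro c
  have card_shift : Nat.card {x // g x = c} = Nat.card {x // g x = c + 1} :=
    Nat.card_congr ((Equiv.addRight u).subtypeEquiv fun x ↦ by simp [h])
  have := card_fiber_add_card_fiber_add_one g c
  omega

theorem IsBalanced.comp_equiv {g : B → ZMod 2} (hg : IsBalanced g) (e : A ≃ B) :
    IsBalanced (g ∘ e) := by
  intro c
  rw [Nat.card_congr e, ← hg c]
  exact congrArg (2 * ·) (Nat.card_congr (e.subtypeEquiv fun _ ↦ Iff.rfl))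

theorem IsBalanced.add_const {g : V → ZMod 2} (hg : IsBalanced g) (d : ZMod 2) :
    IsBalanced fun x ↦ g x + d := by
  intro c
  simp only [← eq_sub_iff_add_eq]
  exact hg (c - d)

theorem isBalanced_of_fibers [Finite A] [Finite B] {g : A × B → ZMod 2}
    (h : ∀ b, IsBalanced fun a ↦ g (a, b)) : IsBalanced g := by
  intro c
  have := Fintype.ofFinite B
  let fibers : {p // g p = c} ≃ Σ b, {a // g (a, b) = c} :=
    { toFun p := ⟨p.1.2, p.1.1, p.2⟩
      invFun q := ⟨(q.2.1, q.1), q.2.2⟩ }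
  calc 2 * Nat.card {p // g p = c}
      = ∑ b, 2 * Nat.card {a // g (a, b) = c} := by
        rw [Nat.card_congr fibers, Nat.card_sigma, Finset.mul_sum]
    _ = ∑ _b : B, Nat.card A := Finset.sum_congr rfl fun b _ ↦ h b c
    _ = Nat.card (A × B) := by
        rw [Finset.sum_const, Finset.card_univ, smul_eq_mul, Nat.card_prod, mul_comm,
          Nat.card_eq_fintype_card (α := B)]

end Balanced

section Derivatives

variable {V V' : Type*} [AddCommGroup V] [AddCommGroup V']

theorem isBent_iff_forall_isBalanced [Finite V] {f : V → ZMod 2} :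
    IsBent f ↔ ∀ a ≠ 0, IsBalanced fun x ↦ f (x + a) + f x := by
  refine forall₂_congr fun a _ ↦ ⟨fun h c ↦ ?_, fun h c ↦ ?_⟩
  · have card_split := card_fiber_add_card_fiber_add_one (fun x ↦ f (x + a) + f x) c
    rw [h c, h (c + 1)] at card_split
    rw [h c, two_mul, card_split]
  · rw [← h c, Nat.mul_div_cancel_left _ two_pos]

theorem IsBent.comp_addEquiv {f : V' → ZMod 2} (hf : IsBent f) (e : V ≃+ V') :
    IsBent (f ∘ e) := by
  intro a ha c
  rw [Nat.card_congr e.toEquiv, ← hf (e a) (e.map_ne_zero_iff.2 ha) c]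
  exact Nat.card_congr (e.toEquiv.subtypeEquiv fun x ↦ by simp)

theorem D2_comp_addEquiv (f : V' → ZMod 2) (e : V ≃+ V') (a b x : V) :
    D2 (f ∘ e) a b x = D2 f (e a) (e b) (e x) := by
  simp only [D2, Function.comp_apply, map_add]

/-- Property (P₁) of a vectorial function `π`: the second derivative `D_a D_b π` does not vanish
identically when `a` and `b` are linearly independent over `F₂`, i.e. distinct and nonzero. -/
def HasPropertyP1 (π : V → V') : Prop :=
  ∀ a b, (∀ x, π x + π (x + a) + π (x + b) + π (x + a + b) = 0) → a = 0 ∨ b = 0 ∨ a = b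

end Derivatives

section Dimension

variable {F M N : Type*} [Field F] [AddCommGroup M] [Module F M] [AddCommGroup N] [Module F N]

theorem finrank_submodule_prod [FiniteDimensional F M] [FiniteDimensional F N]
    (P : Submodule F M) (Q : Submodule F N) :
    Module.finrank F (P.prod Q) = Module.finrank F P + Module.finrank F Q := by
  have range_eq : (P.subtype.prodMap Q.subtype).range = P.prod Q := by
    rw [LinearMap.range_prodMap, P.range_subtype, Q.range_subtype]
  rw [← range_eq, LinearMap.finrank_range_of_inj, Module.finrank_prod]
  exact P.subtype_injective.prodMap Q.subtype_injective

theorem finrank_le_finrank_inf_ker_add_one [FiniteDimensional F M] (U : Submodule F M)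
    (φ : Module.Dual F M) : Module.finrank F U ≤ Module.finrank F ↥(U ⊓ φ.ker) + 1 := by
  have rank_nullity := (φ.domRestrict U).finrank_range_add_finrank_ker
  have finrank_ker :
      Module.finrank F (φ.domRestrict U).ker = Module.finrank F ↥(U ⊓ φ.ker) := by
    rw [LinearMap.ker_domRestrict, ← Submodule.finrank_map_subtype_eq,
      Submodule.map_comap_subtype]
  have finrank_range := (φ.domRestrict U).range.finrank_le
  rw [Module.finrank_self] at finrank_range
  omega

theorem finrank_le_one_of_forall_eq_zero_or_eq_s9 (P : Submodule F M)
    (h : ∀ a ∈ P, ∀ b ∈ P, a = 0 ∨ b = 0 ∨ a = b) : Module.finrank F P ≤ 1 := by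
  by_cases hP : P = ⊥
  · rw [hP, finrank_bot]
    exact zero_le_one
  obtain ⟨a, ha, ha0⟩ := Submodule.exists_mem_ne_zero_of_ne_bot hP
  refine finrank_le_one (⟨a, ha⟩ : P) fun ⟨b, hb⟩ ↦ ?_
  obtain rfl | rfl := (h a ha b hb).resolve_left ha0
  · exact ⟨0, zero_smul F _⟩
  · exact ⟨1, one_smul F _⟩

end Dimension

section Pairing

variable {X Y : Type*} [AddCommGroup X] [Module (ZMod 2) X] [AddCommGroup Y] [Module (ZMod 2) Y]

theorem exists_dual_apply_eq_one {ψ : Module.Dual (ZMod 2) X} (hψ : ψ ≠ 0) : ∃ x, ψ x = 1 := by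
  obtain ⟨x, hx⟩ := DFunLike.ne_iff.1 hψ
  exact ⟨x, Fin.eq_one_of_ne_zero _ hx⟩

variable {β : X →ₗ[ZMod 2] Y →ₗ[ZMod 2] ZMod 2}

theorem exists_left_apply_eq_one (hβ : β.SeparatingRight) {y : Y} (hy : y ≠ 0) :
    ∃ x, β x y = 1 :=
  exists_dual_apply_eq_one (ψ := β.flip y) (mt (fun h ↦ hβ y (LinearMap.congr_fun h)) hy)

theorem exists_right_apply_eq_one (hβ : β.SeparatingLeft) {x : X} (hx : x ≠ 0) :
    ∃ y, β x y = 1 :=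
  exists_dual_apply_eq_one (mt (fun h ↦ hβ x (LinearMap.congr_fun h)) hx)

end Pairing

section MaioranaMcFarland

variable {X Y W : Type*} [AddCommGroup X] [Module (ZMod 2) X] [AddCommGroup W] [Module (ZMod 2) W]
  [AddCommGroup Y]

/-- The Maiorana–McFarland function `(x, y) ↦ ⟨x, π y⟩`, for an arbitrary pairing `β` in place of
the trace form. -/
def mmFunction (β : X →ₗ[ZMod 2] W →ₗ[ZMod 2] ZMod 2) (π : Y → W) (p : X × Y) : ZMod 2 :=
  β p.1 (π p.2)

theorem isBent_mmFunction [Finite X] [Finite Y] {β : X →ₗ[ZMod 2] W →ₗ[ZMod 2] ZMod 2}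
    (hβ : β.Nondegenerate) (π : Y ≃ W) : IsBent (mmFunction β π) := by
  have := Finite.of_equiv Y π
  refine isBent_iff_forall_isBalanced.2 fun ⟨a, b⟩ hab ↦ ?_
  by_cases hb : b = 0
  · subst hb
    obtain ⟨w, hw⟩ := exists_right_apply_eq_one hβ.1 (x := a) (by rintro rfl; exact hab rfl)
    have balanced : IsBalanced (β a) := isBalanced_of_apply_add w fun x ↦ by rw [map_add, hw]
    have derivative_eq : (fun p ↦ mmFunction β π (p + (a, 0)) + mmFunction β π p) =
        (fun q : Y × X ↦ β a (π q.1)) ∘ Equiv.prodComm X Y := by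
      ext ⟨x, y⟩
      simp only [mmFunction, Prod.mk_add_mk, add_zero, map_add, LinearMap.add_apply,
        Function.comp_apply, Equiv.prodComm_apply, Prod.swap_prod_mk]
      grind
    rw [derivative_eq]
    exact (isBalanced_of_fibers fun _ ↦ balanced.comp_equiv π).comp_equiv _
  · refine isBalanced_of_fibers fun y ↦ ?_
    have increment_ne_zero : π (y + b) + π y ≠ 0 := by
      rw [← ZModModule.sub_eq_add, sub_ne_zero, π.injective.ne_iff]
      simpa using hb
    obtain ⟨u, hu⟩ := exists_left_apply_eq_one hβ.2 increment_ne_zero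
    refine isBalanced_of_apply_add u fun x ↦ ?_
    simp only [mmFunction, Prod.mk_add_mk, map_add, LinearMap.add_apply] at hu ⊢
    linear_combination hu

theorem D2_mmFunction (β : X →ₗ[ZMod 2] W →ₗ[ZMod 2] ZMod 2) (π : Y → W) (a b : X × Y) (x : X)
    (y : Y) :
    D2 (mmFunction β π) a b (x, y) =
      β x (π y + π (y + a.2) + π (y + b.2) + π (y + a.2 + b.2)) +
        D2 (mmFunction β π) a b (0, y) := by
  simp only [D2, mmFunction, Prod.fst_add, Prod.snd_add, map_add, LinearMap.add_apply,
    map_zero, LinearMap.zero_apply]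
  ring

theorem HasPropertyP1.of_D2_mmFunction_const {π : Y → W} (hπ : HasPropertyP1 π)
    {β : X →ₗ[ZMod 2] W →ₗ[ZMod 2] ZMod 2} (hβ : β.SeparatingRight) {a b : X × Y}
    (h : ∀ p q, D2 (mmFunction β π) a b p = D2 (mmFunction β π) a b q) :
    a.2 = 0 ∨ b.2 = 0 ∨ a.2 = b.2 :=
  hπ _ _ fun y ↦ hβ _ fun x ↦
    right_eq_add.1 ((h (0, y) (x, y)).trans (D2_mmFunction β π a b x y))

end MaioranaMcFarland

section Concatenation

variable {X Y Z : Type*} [AddCommGroup X] [AddCommGroup Y] [Module (ZMod 2) Y] [AddCommGroup Z]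
  [Module (ZMod 2) Z]

/-- The concatenation `(x, y, z) ↦ g_z(x) + ⟨y, z⟩` of a family of Boolean functions `g_z`; it is a
generalized Maiorana–McFarland function when every `g_z` is a Maiorana–McFarland function. -/
def gmmFunction (γ : Y →ₗ[ZMod 2] Z →ₗ[ZMod 2] ZMod 2) (g : Z → X → ZMod 2) (p : X × Y × Z) :
    ZMod 2 :=
  g p.2.2 p.1 + γ p.2.1 p.2.2

theorem isBent_gmmFunction [Finite X] [Finite Y] [Finite Z]
    {γ : Y →ₗ[ZMod 2] Z →ₗ[ZMod 2] ZMod 2} (hγ : γ.Nondegenerate) {g : Z → X → ZMod 2}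
    (hg : ∀ z, IsBent (g z)) : IsBent (gmmFunction γ g) := by
  refine isBent_iff_forall_isBalanced.2 fun ⟨a, b, c⟩ habc ↦ ?_
  by_cases hc : c = 0
  · subst hc
    by_cases ha : a = 0
    · subst ha
      obtain ⟨u, hu⟩ := exists_right_apply_eq_one hγ.1 (x := b) (by rintro rfl; exact habc rfl)
      refine isBalanced_of_apply_add (0, 0, u) fun ⟨x, y, z⟩ ↦ ?_
      simp only [gmmFunction, Prod.mk_add_mk, map_add, LinearMap.add_apply, add_zero, hu]
      grind
    · refine isBalanced_of_fibers fun ⟨y, z⟩ ↦ ?_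
      convert (isBent_iff_forall_isBalanced.1 (hg z) a ha).add_const (γ b z) using 2 with x
      simp only [gmmFunction, Prod.mk_add_mk, map_add, LinearMap.add_apply, add_zero]
      grind
  · obtain ⟨u, hu⟩ := exists_left_apply_eq_one hγ.2 hc
    refine isBalanced_of_apply_add (0, u, 0) fun ⟨x, y, z⟩ ↦ ?_
    simp only [gmmFunction, Prod.mk_add_mk, map_add, LinearMap.add_apply, add_zero, hu]
    grind

theorem D2_gmmFunction (γ : Y →ₗ[ZMod 2] Z →ₗ[ZMod 2] ZMod 2) {g : Z → X → ZMod 2}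
    {a b : X × Y × Z} {z : Z} (ha : g (z + a.2.2) = g z) (hb : g (z + b.2.2) = g z)
    (hab : g (z + a.2.2 + b.2.2) = g z) (x : X) (y : Y) :
    D2 (gmmFunction γ g) a b (x, y, z) =
      D2 (g z) a.1 b.1 x + (γ a.2.1 b.2.2 + γ b.2.1 a.2.2) := by
  simp only [D2, gmmFunction, Prod.fst_add, Prod.snd_add, ha, hb, hab, map_add,
    LinearMap.add_apply]
  grind

end Concatenation

section Switched

variable {X Y Z W : Type*} [AddCommGroup X] [AddCommGroup Y] [AddCommGroup Z] [AddCommGroup W]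
  [Module (ZMod 2) X] [Module (ZMod 2) Y] [Module (ZMod 2) Z] [Module (ZMod 2) W]

/-- The family `z ↦ g_z` that consists of `⟨x₁, π x₂⟩` on the hyperplane `φ z = 0` and of
`⟨x₂, σ x₁⟩` off it. -/
def switchedFamily (β : X →ₗ[ZMod 2] W →ₗ[ZMod 2] ZMod 2) (π σ : X → W) (φ : Module.Dual (ZMod 2) Z)
    (z : Z) : X × X → ZMod 2 :=
  if φ z = 0 then mmFunction β π else mmFunction β σ ∘ AddEquiv.prodComm

/-- The generalized Maiorana–McFarland function of `switchedFamily`, on the right-nested product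
`X × X × Y × Z`. -/
def switchedGMM (β : X →ₗ[ZMod 2] W →ₗ[ZMod 2] ZMod 2) (π σ : X → W)
    (γ : Y →ₗ[ZMod 2] Z →ₗ[ZMod 2] ZMod 2) (φ : Module.Dual (ZMod 2) Z) :
    X × X × Y × Z → ZMod 2 :=
  gmmFunction γ (switchedFamily β π σ φ) ∘ AddEquiv.prodAssoc.symm

variable {β : X →ₗ[ZMod 2] W →ₗ[ZMod 2] ZMod 2} {γ : Y →ₗ[ZMod 2] Z →ₗ[ZMod 2] ZMod 2}
  {φ : Module.Dual (ZMod 2) Z}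

theorem switchedGMM_apply (π σ : X → W) (x₁ x₂ : X) (y : Y) (z : Z) :
    switchedGMM β π σ γ φ (x₁, x₂, y, z) =
      (if φ z = 0 then β x₁ (π x₂) else β x₂ (σ x₁)) + γ y z := by
  by_cases hz : φ z = 0 <;>
    simp [switchedGMM, gmmFunction, switchedFamily, mmFunction, hz]

theorem isBent_switchedGMM [Finite X] [Finite Y] [Finite Z] (hβ : β.Nondegenerate)
    (hγ : γ.Nondegenerate) (φ : Module.Dual (ZMod 2) Z) (π σ : X ≃ W) :
    IsBent (switchedGMM β π σ γ φ) := by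
  have isBent_family (z : Z) : IsBent (switchedFamily β π σ φ z) := by
    unfold switchedFamily
    split_ifs
    · exact isBent_mmFunction hβ π
    · exact (isBent_mmFunction hβ σ).comp_addEquiv AddEquiv.prodComm
  exact (isBent_gmmFunction hγ isBent_family).comp_addEquiv _

variable {π σ : X → W} {U : Submodule (ZMod 2) (X × X × Y × Z)}

theorem IsMSubspace.D2_switchedFamily_eq (hU : IsMSubspace (switchedGMM β π σ γ φ) U)
    {a b : X × X × Y × Z} (ha : a ∈ U) (hb : b ∈ U) (hφa : φ a.2.2.2 = 0) (hφb : φ b.2.2.2 = 0)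
    (z : Z) (p q : X × X) :
    D2 (switchedFamily β π σ φ z) (a.1, a.2.1) (b.1, b.2.1) p =
      D2 (switchedFamily β π σ φ z) (a.1, a.2.1) (b.1, b.2.1) q := by
  have vanishing (r : X × X) :
      D2 (switchedFamily β π σ φ z) (a.1, a.2.1) (b.1, b.2.1) r +
        (γ a.2.2.1 b.2.2.2 + γ b.2.2.1 a.2.2.2) = 0 := by
    rw [← hU a ha b hb (r.1, r.2, 0, z), switchedGMM, D2_comp_addEquiv]
    have family_add {w : Z} (hw : φ w = 0) (z : Z) :
        switchedFamily β π σ φ (z + w) = switchedFamily β π σ φ z := by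
      simp only [switchedFamily, map_add, hw, add_zero]
    exact (D2_gmmFunction γ (a := ((a.1, a.2.1), a.2.2)) (b := ((b.1, b.2.1), b.2.2))
      (family_add hφa z) (family_add hφb z)
      ((family_add hφb _).trans (family_add hφa z)) r 0).symm
  exact add_right_cancel ((vanishing p).trans (vanishing q).symm)

theorem IsMSubspace.snd_eq_zero_or_eq (hU : IsMSubspace (switchedGMM β π σ γ φ) U)
    (hβ : β.SeparatingRight) (hπ : HasPropertyP1 π) {a b : X × X × Y × Z} (ha : a ∈ U) (hb : b ∈ U)
    (hφa : φ a.2.2.2 = 0) (hφb : φ b.2.2.2 = 0) : a.2.1 = 0 ∨ b.2.1 = 0 ∨ a.2.1 = b.2.1 := by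
  have switch_off : switchedFamily β π σ φ 0 = mmFunction β π := if_pos (map_zero φ)
  exact hπ.of_D2_mmFunction_const hβ (switch_off ▸ hU.D2_switchedFamily_eq ha hb hφa hφb 0)

theorem IsMSubspace.fst_eq_zero_or_eq (hU : IsMSubspace (switchedGMM β π σ γ φ) U)
    (hβ : β.SeparatingRight) (hφ : φ ≠ 0) (hσ : HasPropertyP1 σ) {a b : X × X × Y × Z} (ha : a ∈ U)
    (hb : b ∈ U) (hφa : φ a.2.2.2 = 0) (hφb : φ b.2.2.2 = 0) : a.1 = 0 ∨ b.1 = 0 ∨ a.1 = b.1 := by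
  obtain ⟨z, hz⟩ := DFunLike.ne_iff.1 hφ
  have switch_on : switchedFamily β π σ φ z = mmFunction β σ ∘ AddEquiv.prodComm := if_neg hz
  refine hσ.of_D2_mmFunction_const hβ (a := (a.2.1, a.1)) (b := (b.2.1, b.1)) fun p q ↦ ?_
  have := hU.D2_switchedFamily_eq ha hb hφa hφb z p.swap q.swap
  rwa [switch_on, D2_comp_addEquiv, D2_comp_addEquiv] at this

theorem IsMSubspace.finrank_le_of_switchedGMM [Finite X] [Finite Y] [Finite Z]
    (hU : IsMSubspace (switchedGMM β π σ γ φ) U) (hβ : β.SeparatingRight) (hφ : φ ≠ 0)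
    (hπ : HasPropertyP1 π) (hσ : HasPropertyP1 σ) :
    Module.finrank (ZMod 2) U ≤ Module.finrank (ZMod 2) Y + Module.finrank (ZMod 2) Z + 2 := by
  let lastCoord : X × X × Y × Z →ₗ[ZMod 2] Z :=
    LinearMap.snd _ _ _ ∘ₗ LinearMap.snd _ _ _ ∘ₗ LinearMap.snd _ _ _
  let cut := U ⊓ (φ ∘ₗ lastCoord).ker
  let P₁ := cut.map (LinearMap.fst _ _ _)
  let P₂ := cut.map (LinearMap.fst _ _ _ ∘ₗ LinearMap.snd _ _ _)
  have finrank_P₁ : Module.finrank (ZMod 2) P₁ ≤ 1 := by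
    apply finrank_le_one_of_forall_eq_zero_or_eq_s9
    rintro _ ⟨a, ⟨ha, hφa⟩, rfl⟩ _ ⟨b, ⟨hb, hφb⟩, rfl⟩
    exact hU.fst_eq_zero_or_eq hβ hφ hσ ha hb hφa hφb
  have finrank_P₂ : Module.finrank (ZMod 2) P₂ ≤ 1 := by
    apply finrank_le_one_of_forall_eq_zero_or_eq_s9
    rintro _ ⟨a, ⟨ha, hφa⟩, rfl⟩ _ ⟨b, ⟨hb, hφb⟩, rfl⟩
    exact hU.snd_eq_zero_or_eq hβ hπ ha hb hφa hφb
  have cut_le : cut ≤ P₁.prod (P₂.prod ((⊤ : Submodule (ZMod 2) Y).prod φ.ker)) :=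
    fun v hv ↦ ⟨⟨v, hv, rfl⟩, ⟨v, hv, rfl⟩, trivial, hv.2⟩
  have finrank_cut := Submodule.finrank_mono cut_le
  simp only [finrank_submodule_prod, finrank_top] at finrank_cut
  have finrank_U : Module.finrank (ZMod 2) U ≤ Module.finrank (ZMod 2) cut + 1 :=
    finrank_le_finrank_inf_ker_add_one U (φ ∘ₗ lastCoord)
  have finrank_ker := Module.Dual.finrank_ker_add_one_of_ne_zero hφ
  omega

theorem GMM_gold_bent_outside_MM_general [Finite X] [Finite Y] [Finite Z]
    (hβ : β.Nondegenerate) (hγ : γ.Nondegenerate) (hφ : φ ≠ 0) {π σ : X ≃ W}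
    (hπ : HasPropertyP1 π) (hσ : HasPropertyP1 σ)
    (hXY : Module.finrank (ZMod 2) X > Module.finrank (ZMod 2) Y + 2) :
    IsBent (switchedGMM β π σ γ φ) ∧
      ∀ U, IsMSubspace (switchedGMM β π σ γ φ) U →
        Module.finrank (ZMod 2) U < Module.finrank (ZMod 2) X + Module.finrank (ZMod 2) Z := by
  refine ⟨isBent_switchedGMM hβ hγ φ π σ, fun U hU ↦ ?_⟩
  have := hU.finrank_le_of_switchedGMM hβ.2 hφ hπ hσ
  omega

end Switched

section Gold

variable {K : Type*} [Field K] {q m n : ℕ}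

theorem gold_second_derivative_zero [CharP K 2] (a b : K) :
    0 ^ (2 ^ n + 1) + a ^ (2 ^ n + 1) + b ^ (2 ^ n + 1) + (a + b) ^ (2 ^ n + 1) =
      a ^ 2 ^ n * b + b ^ 2 ^ n * a := by
  rw [zero_pow (Nat.succ_ne_zero _), pow_succ a, pow_succ b, pow_succ (a + b), add_pow_char_pow]
  linear_combination (a ^ 2 ^ n * a + b ^ 2 ^ n * b) * CharTwo.two_eq_zero (R := K)

variable [Finite K]

theorem pow_sub_one_eq_one_of_coprime (hK : Nat.card K = q ^ m) (hnm : n.Coprime m) {u : K}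
    (hu : u ≠ 0) (h : u ^ (q ^ n - 1) = 1) : u ^ (q - 1) = 1 := by
  have := Fintype.ofFinite K
  have fermat : u ^ (q ^ m - 1) = 1 := by
    rw [← hK, Nat.card_eq_fintype_card, FiniteField.pow_card_sub_one_eq_one u hu]
  have pow_gcd : u ^ Nat.gcd (q ^ n - 1) (q ^ m - 1) = 1 := pow_gcd_eq_one.2 ⟨h, fermat⟩
  rwa [Nat.pow_sub_one_gcd_pow_sub_one, hnm, pow_one] at pow_gcd

theorem eq_one_of_pow_two_pow_add_one_eq_one (hK : Nat.card K = 2 ^ m) (hnm : n.Coprime m)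
    (hm : Odd m) {u : K} (h : u ^ (2 ^ n + 1) = 1) : u = 1 := by
  have hu : u ≠ 0 := by
    rintro rfl
    exact zero_ne_one ((zero_pow (Nat.succ_ne_zero _)).symm.trans h)
  have coprime : (n * 2).Coprime m := hnm.mul_left (Nat.coprime_two_left.2 hm)
  have pow_eq_one : u ^ (2 ^ (n * 2) - 1) = 1 := by
    rw [pow_mul, ← one_pow 2, Nat.sq_sub_sq, pow_mul, h, one_pow]
  simpa using pow_sub_one_eq_one_of_coprime hK coprime hu pow_eq_one

theorem gold_injective (hK : Nat.card K = 2 ^ m) (hnm : n.Coprime m) (hm : Odd m) :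
    Function.Injective fun x : K ↦ x ^ (2 ^ n + 1) := by
  intro x y (hxy : x ^ (2 ^ n + 1) = y ^ (2 ^ n + 1))
  by_cases hy : y = 0
  · subst hy
    simpa using hxy
  refine (div_eq_one_iff_eq hy).1 (eq_one_of_pow_two_pow_add_one_eq_one hK hnm hm ?_)
  rw [div_pow, hxy, div_self (pow_ne_zero _ hy)]

/-- The Gold map `x ↦ x ^ (2 ^ n + 1)` as a permutation of the field with `2 ^ m` elements. -/
noncomputable def goldPerm (hK : Nat.card K = 2 ^ m) (hnm : n.Coprime m) (hm : Odd m) :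
    Equiv.Perm K :=
  Equiv.ofBijective _ (Finite.injective_iff_bijective.1 (gold_injective hK hnm hm))

theorem hasPropertyP1_gold [CharP K 2] (hK : Nat.card K = 2 ^ m) (hnm : n.Coprime m) :
    HasPropertyP1 fun x : K ↦ x ^ (2 ^ n + 1) := by
  intro a b h
  by_cases ha : a = 0
  · exact Or.inl ha
  by_cases hb : b = 0
  · exact Or.inr (Or.inl hb)
  have cross_eq : a ^ 2 ^ n * b = b ^ 2 ^ n * a := by
    rw [← CharTwo.add_eq_zero, ← gold_second_derivative_zero]
    simpa only [zero_add] using h 0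
  have ratio_fixed : (a / b) ^ 2 ^ n = a / b := by
    rw [div_pow, div_eq_div_iff (pow_ne_zero _ hb) hb, cross_eq, mul_comm]
  have ratio_pow : (a / b) ^ (2 ^ n - 1) = 1 := by
    rw [pow_sub₀ _ (div_ne_zero ha hb) Nat.one_le_two_pow, ratio_fixed, pow_one,
      mul_inv_cancel₀ (div_ne_zero ha hb)]
  have ratio_eq_one : a / b = 1 := by
    simpa using pow_sub_one_eq_one_of_coprime hK hnm (div_ne_zero ha hb) ratio_pow
  exact Or.inr (Or.inr ((div_eq_one_iff_eq hb).1 ratio_eq_one))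

end Gold

/-- Corollary 3.12: the generalized Maiorana–McFarland function built from the two
Maiorana–McFarland functions `Tr(x₁ x₂^{2^k+1})` and `Tr(x₂ x₁^{2^k+1})` (Gold
permutation) is a bent function with no `M`-subspace of dimension `m + k`, hence lies
outside the completed Maiorana–McFarland class. -/
theorem GMM_gold_bent_outside_MM
    (m k : ℕ) (hk : 0 < k) (hm : 0 < m) (hgcd : Nat.gcd k m = 1) (hodd : Odd m)
    (hmk : m > k + 2)
    (f : GaloisField 2 m × GaloisField 2 m × GaloisField 2 k × GaloisField 2 k → ZMod 2)
    (hf : ∀ (x₁ x₂ : GaloisField 2 m) (y z : GaloisField 2 k),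
      f (x₁, x₂, y, z) =
        (if Tr k z = 0 then Tr m (x₁ * x₂ ^ (2 ^ k + 1)) else Tr m (x₂ * x₁ ^ (2 ^ k + 1)))
          + Tr k (y * z)) :
    IsBent f ∧
    ∀ U : Submodule (ZMod 2)
        (GaloisField 2 m × GaloisField 2 m × GaloisField 2 k × GaloisField 2 k),
      IsMSubspace f U → Module.finrank (ZMod 2) U < m + k := by
  have card_eq := GaloisField.card 2 m hm.ne'
  have finrank_m := GaloisField.finrank 2 hm.ne'
  have finrank_k := GaloisField.finrank 2 hk.ne'
  obtain rfl : f = switchedGMM (Algebra.traceForm _ _) (goldPerm card_eq hgcd hodd)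
      (goldPerm card_eq hgcd hodd) (Algebra.traceForm _ _) (Algebra.trace _ _) := by
    ext ⟨x₁, x₂, y, z⟩
    rw [hf, switchedGMM_apply]
    rfl
  have gold_P1 : HasPropertyP1 (goldPerm card_eq hgcd hodd) := hasPropertyP1_gold card_eq hgcd
  have dim_gap : Module.finrank (ZMod 2) (GaloisField 2 m) >
      Module.finrank (ZMod 2) (GaloisField 2 k) + 2 := by rwa [finrank_m, finrank_k]
  simpa only [finrank_m, finrank_k] using
    GMM_gold_bent_outside_MM_general (traceForm_nondegenerate _ _) (traceForm_nondegenerate _ _)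
      (Algebra.trace_ne_zero _ _) gold_P1 gold_P1 dim_gap
end
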